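/- arXiv:1404.0999 — 3 statements merged into one kernel-verified Lean document; each statement's English description precedes it below -/
import Mathlib

section
/- Let d ≥ 1 and let μ and ν be Borel probability measures on ℝ^d with finite first moments. Then μ ≤cx ν if and only if there exists a coupling λ of μ and ν that is a martingale coupling. -/
open MeasureTheory ProbabilityTheory Filter

noncomputable section

abbrev Euc (d : ℕ) : Type := EuclideanSpace ℝ (Fin d)

def FiniteFirstMoment {d : ℕ} (μ : Measure (Euc d)) : Prop :=
  Integrable (fun x => x) μ

def ConvexOrder {d : ℕ} (μ ν : Measure (Euc d)) : Prop :=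
  ∀ φ : Euc d → ℝ, ConvexOn ℝ Set.univ φ → Integrable φ μ → Integrable φ ν →
    ∫ x, φ x ∂μ ≤ ∫ x, φ x ∂ν

def CoordMono {d : ℕ} (φ : Euc d → ℝ) : Prop :=
  ∀ x y : Euc d, (∀ i, x i ≤ y i) → φ x ≤ φ y

def IncConvexOrder {d : ℕ} (μ ν : Measure (Euc d)) : Prop :=
  ∀ φ : Euc d → ℝ, ConvexOn ℝ Set.univ φ → CoordMono φ → Integrable φ μ → Integrable φ ν →
    ∫ x, φ x ∂μ ≤ ∫ x, φ x ∂ν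

def IsCoupling {d : ℕ} (lam : Measure (Euc d × Euc d)) (μ ν : Measure (Euc d)) : Prop :=
  lam.map Prod.fst = μ ∧ lam.map Prod.snd = ν

def fstSigma (d : ℕ) : MeasurableSpace (Euc d × Euc d) :=
  MeasurableSpace.comap Prod.fst inferInstance

def IsMartingaleCoupling {d : ℕ} (lam : Measure (Euc d × Euc d)) : Prop :=
  lam[(fun p : Euc d × Euc d => p.2) | fstSigma d] =ᵐ[lam] (fun p => p.1)

def IsSubmartingaleCoupling {d : ℕ} (lam : Measure (Euc d × Euc d)) : Prop :=
  ∀ᵐ p ∂lam, ∀ i, p.1 i ≤ (lam[(fun q : Euc d × Euc d => q.2) | fstSigma d]) p i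


open scoped Topology RealInnerProductSpace

namespace Strassen

/-- Linear growth. -/
def LG {E : Type*} [NormedAddCommGroup E] (u : E → ℝ) : Prop :=
  ∃ C : ℝ, ∀ x, |u x| ≤ C * (1 + ‖x‖)

/-- The space of all functions with linear growth. -/
def growthSub (E : Type*) [NormedAddCommGroup E] : Submodule ℝ (E → ℝ) where
  carrier := {u | LG u}
  zero_mem' := ⟨0, fun x => by simp⟩
  add_mem' := by
    rintro u v ⟨C, hC⟩ ⟨D, hD⟩
    refine ⟨C + D, fun x => ?_⟩
    have := hC x
    have := hD x
    have := abs_add_le (u x) (v x)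
    simp only [Pi.add_apply]
    linarith
  smul_mem' := by
    rintro c u ⟨C, hC⟩
    refine ⟨|c| * C, fun x => ?_⟩
    simp only [Pi.smul_apply, smul_eq_mul, abs_mul, mul_assoc]
    exact mul_le_mul_of_nonneg_left (hC x) (abs_nonneg c)

theorem LG.add {E : Type*} [NormedAddCommGroup E] {u v : E → ℝ} (hu : LG u) (hv : LG v) :
    LG (u + v) := (growthSub E).add_mem hu hv

theorem LG.smul {E : Type*} [NormedAddCommGroup E] {u : E → ℝ} (c : ℝ) (hu : LG u) :
    LG (c • u) := (growthSub E).smul_mem c hu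

theorem LG.neg {E : Type*} [NormedAddCommGroup E] {u : E → ℝ} (hu : LG u) :
    LG (-u) := (growthSub E).neg_mem hu

theorem LG.zero {E : Type*} [NormedAddCommGroup E] :
    LG (0 : E → ℝ) := (growthSub E).zero_mem

theorem LG.integrable {d : ℕ} {u : Euc d → ℝ} (hu : LG u) (hm : Measurable u)
    {μ : Measure (Euc d)} [IsProbabilityMeasure μ] (hμ : FiniteFirstMoment μ) :
    Integrable u μ := by
  obtain ⟨C, hC⟩ := hu
  have h1 : Integrable (fun x : Euc d => C * (1 + ‖x‖)) μ :=
    ((integrable_const 1).add (Integrable.norm hμ)).const_mul C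
  exact h1.mono' hm.aestronglyMeasurable (Eventually.of_forall hC)

theorem dual_nonneg {d : ℕ} {μ ν : Measure (Euc d)}
    [IsProbabilityMeasure μ] [IsProbabilityMeasure ν]
    (hμ : FiniteFirstMoment μ) (hν : FiniteFirstMoment ν) (hcx : ConvexOrder μ ν)
    {u v : Euc d → ℝ} {a : Euc d → Euc d} (hu : LG u) (hum : Measurable u)
    (hv : LG v) (hvm : Measurable v)
    (h : ∀ x y, 0 ≤ u x + ⟪a x, y - x⟫ + v y) :
    0 ≤ ∫ x, u x ∂μ + ∫ y, v y ∂ν := by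
  set φ : Euc d → ℝ := fun y => ⨆ x, (⟪a x, x - y⟫ - u x) with hφ
  have hneg : ∀ x y, ⟪a x, x - y⟫ = - ⟪a x, y - x⟫ := fun x y => by
    rw [← inner_neg_right, neg_sub]
  have hle : ∀ y x, ⟪a x, x - y⟫ - u x ≤ v y := fun y x => by
    rw [hneg]; linarith [h x y]
  have hbdd : ∀ y, BddAbove (Set.range fun x => ⟪a x, x - y⟫ - u x) := fun y =>
    ⟨v y, by rintro _ ⟨x, rfl⟩; exact hle y x⟩
  have hge : ∀ y x, ⟪a x, x - y⟫ - u x ≤ φ y := fun y x => le_ciSup (hbdd y) x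
  have hφv : ∀ y, φ y ≤ v y := fun y => ciSup_le (hle y)
  have hφu : ∀ x, - u x ≤ φ x := fun x => by simpa using hge x x
  have hconv : ConvexOn ℝ Set.univ φ := by
    refine ⟨convex_univ, fun y _ z _ s t hs ht hst => ciSup_le fun x => ?_⟩
    have h1 := mul_le_mul_of_nonneg_left (hge y x) hs
    have h2 := mul_le_mul_of_nonneg_left (hge z x) ht
    simp only [smul_eq_mul]
    refine le_trans (le_of_eq ?_) (add_le_add h1 h2)
    simp only [inner_sub_right, inner_add_right, inner_smul_right]
    have : s = 1 - t := by linarith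
    subst this
    ring
  have hcont : Continuous φ := by
    rw [← continuousOn_univ]; exact hconv.continuousOn isOpen_univ
  have hLG : LG φ := by
    obtain ⟨C, hC⟩ := hv
    refine ⟨|C| + |u 0| + ‖a 0‖, fun y => ?_⟩
    have h1 := hC y
    have h2 : C * (1 + ‖y‖) ≤ |C| * (1 + ‖y‖) := by gcongr; exact le_abs_self C
    have h3 := hge y 0
    have h4 := abs_real_inner_le_norm (a 0) (0 - y)
    rw [zero_sub, norm_neg] at h4
    rw [zero_sub] at h3
    have h5 := abs_le.1 h4
    have h6 := le_abs_self (u 0)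
    have h7 := hφv y
    have h8 := le_abs_self (v y)
    have h9 : 0 ≤ |C| * ‖y‖ := by positivity
    have h10 : 0 ≤ |u 0| * ‖y‖ := by positivity
    have := norm_nonneg (a 0)
    have h11 : 0 ≤ ‖a 0‖ * ‖y‖ := by positivity
    have := abs_nonneg C
    have := abs_nonneg (u 0)
    rw [abs_le]
    constructor <;> nlinarith
  have hiμ := hLG.integrable hcont.measurable hμ
  have hiν := hLG.integrable hcont.measurable hν
  have e1 := hcx φ hconv hiμ hiν
  have e2 : ∫ x, φ x ∂ν ≤ ∫ x, v x ∂ν := integral_mono hiν (hv.integrable hvm hν) hφv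
  have e3 : ∫ x, - u x ∂μ ≤ ∫ x, φ x ∂μ := integral_mono (hu.integrable hum hμ).neg hiμ hφu
  rw [integral_neg] at e3
  linarith

/-- The values of dual superhedges of `f`. -/
def hedge {d : ℕ} (μ ν : Measure (Euc d)) (f : Euc d × Euc d → ℝ) : Set ℝ :=
  {t | ∃ (u v : Euc d → ℝ) (a : Euc d → Euc d), LG u ∧ Measurable u ∧ LG v ∧ Measurable v ∧
    (∀ x y, f (x, y) ≤ u x + ⟪a x, y - x⟫ + v y) ∧ t = ∫ x, u x ∂μ + ∫ y, v y ∂ν}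

theorem hedge_add {d : ℕ} {μ ν : Measure (Euc d)}
    [IsProbabilityMeasure μ] [IsProbabilityMeasure ν]
    (hμ : FiniteFirstMoment μ) (hν : FiniteFirstMoment ν) {f g : Euc d × Euc d → ℝ} {s t : ℝ}
    (hs : s ∈ hedge μ ν f) (ht : t ∈ hedge μ ν g) : s + t ∈ hedge μ ν (f + g) := by
  obtain ⟨u, v, a, hu, hum, hv, hvm, h, rfl⟩ := hs
  obtain ⟨u', v', a', hu', hum', hv', hvm', h', rfl⟩ := ht
  refine ⟨u + u', v + v', a + a', hu.add hu', hum.add hum', hv.add hv', hvm.add hvm', ?_, ?_⟩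
  · intro x y
    have := h x y
    have := h' x y
    simp only [Pi.add_apply, inner_add_left]
    linarith
  · have e1 := integral_add (hu.integrable hum hμ) (hu'.integrable hum' hμ)
    have e2 := integral_add (hv.integrable hvm hν) (hv'.integrable hvm' hν)
    simp only [Pi.add_apply]
    rw [e1, e2]; ring

theorem hedge_smul {d : ℕ} {μ ν : Measure (Euc d)} {f : Euc d × Euc d → ℝ} {s : ℝ} {c : ℝ}
    (hc : 0 < c) (hs : s ∈ hedge μ ν f) : c * s ∈ hedge μ ν (c • f) := by
  obtain ⟨u, v, a, hu, hum, hv, hvm, h, rfl⟩ := hs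
  refine ⟨c • u, c • v, c • a, hu.smul c, hum.const_smul c, hv.smul c, hvm.const_smul c, ?_, ?_⟩
  · intro x y
    have := mul_le_mul_of_nonneg_left (h x y) hc.le
    simp only [Pi.smul_apply, inner_smul_left, smul_eq_mul]
    simp
    linarith
  · simp only [Pi.smul_apply, smul_eq_mul, integral_const_mul]; ring

theorem hedge_nonempty {d : ℕ} (μ ν : Measure (Euc d)) {f : Euc d × Euc d → ℝ} (hf : LG f) :
    (hedge μ ν f).Nonempty := by
  obtain ⟨C, hC⟩ := hf
  have hw : LG (fun x : Euc d => |C| * (1 + ‖x‖)) := ⟨|C|, fun x => by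
    rw [abs_of_nonneg (by positivity)]⟩
  refine ⟨_, fun x => |C| * (1 + ‖x‖), fun x => |C| * (1 + ‖x‖), 0, hw, by fun_prop, hw,
    by fun_prop, ?_, rfl⟩
  intro x y
  have h1 := (le_abs_self _).trans (hC (x, y))
  have h2 : ‖(x, y)‖ ≤ ‖x‖ + ‖y‖ := by
    rw [Prod.norm_def]; exact max_le_add_of_nonneg (norm_nonneg x) (norm_nonneg y)
  have h3 : C * (1 + ‖(x, y)‖) ≤ |C| * ((1 + ‖x‖) + (1 + ‖y‖)) :=
    mul_le_mul (le_abs_self C) (by linarith) (by positivity) (abs_nonneg C)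
  simp
  linarith

theorem hedge_bdd {d : ℕ} {μ ν : Measure (Euc d)}
    [IsProbabilityMeasure μ] [IsProbabilityMeasure ν]
    (hμ : FiniteFirstMoment μ) (hν : FiniteFirstMoment ν) (hcx : ConvexOrder μ ν)
    {f : Euc d × Euc d → ℝ} (hf : LG f) : BddBelow (hedge μ ν f) := by
  obtain ⟨s, hs⟩ := hedge_nonempty μ ν hf.neg
  refine ⟨-s, fun t ht => ?_⟩
  have := hedge_add hμ hν hs ht
  rw [neg_add_cancel] at this
  obtain ⟨u, v, a, hu, hum, hv, hvm, h, e⟩ := this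
  have := dual_nonneg hμ hν hcx hu hum hv hvm (a := a) (by simpa using h)
  linarith

theorem exists_L {d : ℕ} {μ ν : Measure (Euc d)}
    [IsProbabilityMeasure μ] [IsProbabilityMeasure ν]
    (hμ : FiniteFirstMoment μ) (hν : FiniteFirstMoment ν) (hcx : ConvexOrder μ ν) :
    ∃ L : growthSub (Euc d × Euc d) →ₗ[ℝ] ℝ, ∀ f : growthSub (Euc d × Euc d),
      ∀ t ∈ hedge μ ν f.1, L f ≤ t := by
  have hsm : ∀ c : ℝ, 0 < c → ∀ f : growthSub (Euc d × Euc d),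
      sInf (hedge μ ν (c • f).1) ≤ c * sInf (hedge μ ν f.1) := by
    intro c hc f
    rw [← div_le_iff₀' hc]
    refine le_csInf (hedge_nonempty μ ν f.2) fun s hs => ?_
    rw [div_le_iff₀' hc]
    exact csInf_le (hedge_bdd hμ hν hcx (c • f).2) (hedge_smul hc hs)
  have hhom : ∀ c : ℝ, 0 < c → ∀ f : growthSub (Euc d × Euc d),
      sInf (hedge μ ν (c • f).1) = c * sInf (hedge μ ν f.1) := by
    intro c hc f
    refine le_antisymm (hsm c hc f) ?_
    have := hsm c⁻¹ (inv_pos.2 hc) (c • f)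
    rw [inv_smul_smul₀ hc.ne'] at this
    rwa [← div_eq_inv_mul, le_div_iff₀' hc] at this
  have hadd : ∀ f g : growthSub (Euc d × Euc d),
      sInf (hedge μ ν (f + g).1) ≤ sInf (hedge μ ν f.1) + sInf (hedge μ ν g.1) := by
    intro f g
    have h1 : ∀ s ∈ hedge μ ν f.1, sInf (hedge μ ν (f + g).1) - s ≤ sInf (hedge μ ν g.1) := by
      intro s hs
      refine le_csInf (hedge_nonempty μ ν g.2) fun t ht => ?_
      have := csInf_le (hedge_bdd hμ hν hcx (f + g).2) (hedge_add hμ hν hs ht)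
      linarith
    have h2 : sInf (hedge μ ν (f + g).1) - sInf (hedge μ ν g.1) ≤ sInf (hedge μ ν f.1) :=
      le_csInf (hedge_nonempty μ ν f.2) fun s hs => by linarith [h1 s hs]
    linarith
  have hzero : ∀ x : (⊥ : growthSub (Euc d × Euc d) →ₗ.[ℝ] ℝ).domain,
      (⊥ : growthSub (Euc d × Euc d) →ₗ.[ℝ] ℝ) x ≤ sInf (hedge μ ν x.1.1) := by
    rintro ⟨x, hx⟩
    have hx0 : x = 0 := (Submodule.mem_bot ℝ).1 hx
    subst hx0
    have : (⊥ : growthSub (Euc d × Euc d) →ₗ.[ℝ] ℝ) ⟨0, hx⟩ = 0 := LinearPMap.map_zero _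
    rw [this]
    refine le_csInf (hedge_nonempty μ ν LG.zero) ?_
    rintro t ⟨u, v, a, hu, hum, hv, hvm, h, e⟩
    have := dual_nonneg hμ hν hcx hu hum hv hvm (a := a) (by simpa using h)
    linarith
  obtain ⟨L, -, hL⟩ := exists_extension_of_le_sublinear
    (⊥ : growthSub (Euc d × Euc d) →ₗ.[ℝ] ℝ) (fun f => sInf (hedge μ ν f.1)) hhom hadd hzero
  exact ⟨L, fun f t ht => (hL f).trans (csInf_le (hedge_bdd hμ hν hcx f.2) ht)⟩


theorem LG.fst {d : ℕ} {u : Euc d → ℝ} (hu : LG u) : LG (fun p : Euc d × Euc d => u p.1) := by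
  obtain ⟨C, hC⟩ := hu
  refine ⟨|C|, fun p => (hC p.1).trans ?_⟩
  exact mul_le_mul (le_abs_self C) (by linarith [norm_fst_le p]) (by positivity) (abs_nonneg C)

theorem LG.snd {d : ℕ} {u : Euc d → ℝ} (hu : LG u) : LG (fun p : Euc d × Euc d => u p.2) := by
  obtain ⟨C, hC⟩ := hu
  refine ⟨|C|, fun p => (hC p.2).trans ?_⟩
  exact mul_le_mul (le_abs_self C) (by linarith [norm_snd_le p]) (by positivity) (abs_nonneg C)

theorem LG.of_le {E : Type*} [NormedAddCommGroup E] {u v : E → ℝ} (hv : LG v)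
    (h : ∀ x, |u x| ≤ |v x|) : LG u := by
  obtain ⟨C, hC⟩ := hv
  exact ⟨C, fun x => (h x).trans (hC x)⟩

theorem LG.of_bdd {E : Type*} [NormedAddCommGroup E] {u : E → ℝ} {C : ℝ}
    (h : ∀ x, |u x| ≤ C) : LG u := by
  refine ⟨|C|, fun x => (h x).trans ((le_abs_self C).trans ?_)⟩
  have := mul_nonneg (abs_nonneg C) (norm_nonneg x)
  linarith

theorem exists_L' {d : ℕ} {μ ν : Measure (Euc d)}
    [IsProbabilityMeasure μ] [IsProbabilityMeasure ν]
    (hμ : FiniteFirstMoment μ) (hν : FiniteFirstMoment ν) (hcx : ConvexOrder μ ν) :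
    ∃ L : growthSub (Euc d × Euc d) →ₗ[ℝ] ℝ,
      (∀ f g : growthSub (Euc d × Euc d), (∀ p, f.1 p ≤ g.1 p) → L f ≤ L g) ∧
      (∀ (u : Euc d → ℝ) (hu : LG u), Measurable u → L ⟨_, hu.fst⟩ = ∫ x, u x ∂μ) ∧
      (∀ (u : Euc d → ℝ) (hu : LG u), Measurable u → L ⟨_, hu.snd⟩ = ∫ x, u x ∂ν) ∧
      (∀ (a : Euc d → Euc d) (h : LG (fun p : Euc d × Euc d => ⟪a p.1, p.2 - p.1⟫)),
        L ⟨_, h⟩ = 0) := by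
  obtain ⟨L, hL⟩ := exists_L hμ hν hcx
  have h0 : Measurable (0 : Euc d → ℝ) := measurable_const
  have anti : ∀ (f : growthSub (Euc d × Euc d)) (t : ℝ), t ∈ hedge μ ν f.1 →
      -t ∈ hedge μ ν (-f).1 → L f = t := by
    intro f t h1 h2
    have e1 := hL _ _ h1
    have e2 := hL _ _ h2
    rw [map_neg] at e2
    linarith
  refine ⟨L, ?_, ?_, ?_, ?_⟩
  · intro f g h
    have := hL (f - g) 0 ⟨0, 0, 0, LG.zero, h0, LG.zero, h0, fun x y => ?_, by simp⟩
    · rw [map_sub] at this; linarith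
    · simpa using h (x, y)
  · intro u hu hm
    refine anti _ _ ⟨u, 0, 0, hu, hm, LG.zero, h0, fun x y => ?_, by simp⟩
      ⟨-u, 0, 0, hu.neg, hm.neg, LG.zero, h0, fun x y => ?_, by simp [integral_neg]⟩ <;> simp
  · intro u hu hm
    refine anti _ _ ⟨0, u, 0, LG.zero, h0, hu, hm, fun x y => ?_, by simp⟩
      ⟨0, -u, 0, LG.zero, h0, hu.neg, hm.neg, fun x y => ?_, by simp [integral_neg]⟩ <;> simp
  · intro a h
    refine anti _ _ ⟨0, 0, a, LG.zero, h0, LG.zero, h0, fun x y => ?_, by simp⟩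
      ⟨0, 0, -a, LG.zero, h0, LG.zero, h0, fun x y => ?_, by simp⟩ <;> simp

/-- Cutoff functions. -/
def chi {E : Type*} [NormedAddCommGroup E] (n : ℕ) (p : E) : ℝ :=
  max 0 (min 1 ((n : ℝ) + 1 - ‖p‖))

theorem chi_cont {E : Type*} [NormedAddCommGroup E] (n : ℕ) : Continuous (chi (E := E) n) := by
  unfold chi; fun_prop

theorem chi_nonneg {E : Type*} [NormedAddCommGroup E] (n : ℕ) (p : E) : 0 ≤ chi n p :=
  le_max_left _ _

theorem chi_le_one {E : Type*} [NormedAddCommGroup E] (n : ℕ) (p : E) : chi n p ≤ 1 :=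
  max_le zero_le_one (min_le_left _ _)

theorem chi_eq_one {E : Type*} [NormedAddCommGroup E] {n : ℕ} {p : E} (h : ‖p‖ ≤ n) :
    chi n p = 1 := by
  unfold chi
  rw [min_eq_left (by linarith), max_eq_right zero_le_one]

theorem chi_eq_zero {E : Type*} [NormedAddCommGroup E] {n : ℕ} {p : E} (h : (n : ℝ) + 1 ≤ ‖p‖) :
    chi n p = 0 := by
  unfold chi
  rw [max_eq_left ((min_le_right _ _).trans (by linarith))]

theorem chi_supp {d : ℕ} (f : Euc d × Euc d → ℝ) (n : ℕ) :
    HasCompactSupport (fun p => f p * chi n p) := by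
  refine HasCompactSupport.of_support_subset_isCompact
    (isCompact_closedBall (0 : Euc d × Euc d) (n + 1)) fun p hp => ?_
  rw [mem_closedBall_zero_iff]
  by_contra hcon
  exact hp (by simp [chi_eq_zero (le_of_not_ge hcon)])

/-- Tail functions. -/
def tail {E : Type*} [NormedAddCommGroup E] (n : ℕ) (x : E) : ℝ :=
  Set.indicator {x : E | (n : ℝ) < ‖x‖} (fun x => 1 + ‖x‖) x

theorem tail_nonneg {E : Type*} [NormedAddCommGroup E] (n : ℕ) (x : E) : 0 ≤ tail n x :=
  Set.indicator_nonneg (fun _ _ => by positivity) x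

theorem tail_le {E : Type*} [NormedAddCommGroup E] (n : ℕ) (x : E) : tail n x ≤ 1 + ‖x‖ :=
  Set.indicator_le_self' (fun _ _ => by positivity) x

theorem tail_LG {E : Type*} [NormedAddCommGroup E] (n : ℕ) : LG (tail (E := E) n) :=
  ⟨1, fun x => by rw [abs_of_nonneg (tail_nonneg n x), one_mul]; exact tail_le n x⟩

theorem tail_meas {d : ℕ} (n : ℕ) : Measurable (tail (E := Euc d) n) := by
  unfold tail
  exact Measurable.indicator (by fun_prop) (measurableSet_lt (by fun_prop) (by fun_prop))

theorem tail_tendsto {d : ℕ} {μ : Measure (Euc d)} [IsProbabilityMeasure μ]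
    (hμ : FiniteFirstMoment μ) : Tendsto (fun n => ∫ x, tail n x ∂μ) atTop (𝓝 0) := by
  have : Tendsto (fun n => ∫ x, tail n x ∂μ) atTop (𝓝 (∫ x, (0 : ℝ) ∂μ)) := by
    refine tendsto_integral_of_dominated_convergence (fun x : Euc d => 1 + ‖x‖)
      (fun n => (tail_meas n).aestronglyMeasurable)
      ((integrable_const 1).add (Integrable.norm hμ)) (fun n => ?_) ?_
    · refine Eventually.of_forall fun x => ?_
      rw [Real.norm_eq_abs, abs_of_nonneg (tail_nonneg n x)]; exact tail_le n x
    · refine Eventually.of_forall fun x => ?_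
      obtain ⟨N, hN⟩ := exists_nat_ge ‖x‖
      refine tendsto_const_nhds.congr' ?_
      filter_upwards [eventually_ge_atTop N] with n hn
      have : (N : ℝ) ≤ n := by exact_mod_cast hn
      unfold tail
      rw [Set.indicator_of_notMem]
      simp only [Set.mem_ofPred_eq, not_lt]; linarith
  simpa using this

theorem tail_bound {d : ℕ} (n : ℕ) (p : Euc d × Euc d) :
    (1 + ‖p‖) * (1 - chi n p) ≤ tail n p.1 + tail n p.2 := by
  have t1 := tail_nonneg n p.1
  have t2 := tail_nonneg n p.2
  by_cases hp : ‖p‖ ≤ n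
  · rw [chi_eq_one hp]; linarith
  · rw [not_le] at hp
    have h1 : (1 + ‖p‖) * (1 - chi n p) ≤ 1 + ‖p‖ := by
      have := chi_nonneg n p
      have := norm_nonneg p
      nlinarith
    refine h1.trans ?_
    rcases max_choice ‖p.1‖ ‖p.2‖ with h | h <;> rw [← Prod.norm_def] at h <;> rw [h] at hp ⊢
    · have : tail n p.1 = 1 + ‖p.1‖ := Set.indicator_of_mem hp _
      linarith
    · have : tail n p.2 = 1 + ‖p.2‖ := Set.indicator_of_mem hp _
      linarith

open scoped CompactlySupported in
theorem exists_riesz {d : ℕ} (L : growthSub (Euc d × Euc d) →ₗ[ℝ] ℝ)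
    (hmono : ∀ f g : growthSub (Euc d × Euc d), (∀ p, f.1 p ≤ g.1 p) → L f ≤ L g) :
    ∃ lam : Measure (Euc d × Euc d), IsLocallyFiniteMeasure lam ∧
      ∀ (f : Euc d × Euc d → ℝ) (h : LG f), Continuous f → HasCompactSupport f →
        ∫ p, f p ∂lam = L ⟨f, h⟩ := by
  have hc : ∀ f : C_c(Euc d × Euc d, ℝ), LG (f : Euc d × Euc d → ℝ) := fun f => by
    obtain ⟨C, hC⟩ := f.continuous.bounded_above_of_compact_support f.hasCompactSupport
    exact LG.of_bdd hC
  let Λ₀ : C_c(Euc d × Euc d, ℝ) →ₗ[ℝ] ℝ :=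
    { toFun := fun f => L ⟨f, hc f⟩
      map_add' := fun f g => by
        rw [← map_add]; rfl
      map_smul' := fun c f => by
        rw [RingHom.id_apply, ← map_smul]; rfl }
  let Λ : C_c(Euc d × Euc d, ℝ) →ₚ[ℝ] ℝ := PositiveLinearMap.mk₀ Λ₀ (fun f hf => by
    have := hmono 0 ⟨f, hc f⟩ (fun p => hf p)
    rwa [map_zero] at this)
  refine ⟨RealRMK.rieszMeasure Λ, inferInstance, fun f h hf hs => ?_⟩
  exact RealRMK.integral_rieszMeasure Λ ⟨⟨f, hf⟩, hs⟩

theorem exists_measure {d : ℕ} {μ ν : Measure (Euc d)}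
    [IsProbabilityMeasure μ] [IsProbabilityMeasure ν]
    (hμ : FiniteFirstMoment μ) (hν : FiniteFirstMoment ν) (hcx : ConvexOrder μ ν) :
    ∃ lam : Measure (Euc d × Euc d), Integrable (fun p => 1 + ‖p‖) lam ∧
      (∀ u : Euc d → ℝ, LG u → Continuous u → ∫ p, u p.1 ∂lam = ∫ x, u x ∂μ) ∧
      (∀ u : Euc d → ℝ, LG u → Continuous u → ∫ p, u p.2 ∂lam = ∫ x, u x ∂ν) ∧
      (∀ a : Euc d → Euc d, Continuous a → LG (fun p : Euc d × Euc d => ⟪a p.1, p.2 - p.1⟫) →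
        ∫ p, ⟪a p.1, p.2 - p.1⟫ ∂lam = 0) := by
  obtain ⟨L, hmono, hL1, hL2, hL3⟩ := exists_L' hμ hν hcx
  obtain ⟨lam, hlf, hlam⟩ := exists_riesz L hmono
  have hWLG : LG (fun p : Euc d × Euc d => 1 + ‖p‖) :=
    ⟨1, fun p => by rw [abs_of_nonneg (by positivity), one_mul]⟩
  have hchi : ∀ (f : Euc d × Euc d → ℝ) (n : ℕ), LG f → LG (fun p => f p * chi n p) := by
    intro f n hf
    refine hf.of_le fun p => ?_
    rw [abs_mul, abs_of_nonneg (chi_nonneg n p)]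
    exact mul_le_of_le_one_right (abs_nonneg _) (chi_le_one n p)
  have hW : Integrable (fun p : Euc d × Euc d => 1 + ‖p‖) lam := by
    have hcov : AECover lam atTop (fun n : ℕ => Metric.closedBall (0 : Euc d × Euc d) n) :=
      aecover_closedBall tendsto_natCast_atTop_atTop
    have hloc : ∀ n : ℕ, IntegrableOn (fun p : Euc d × Euc d => 1 + ‖p‖)
        (Metric.closedBall (0 : Euc d × Euc d) n) lam := fun n =>
      ContinuousOn.integrableOn_compact (isCompact_closedBall _ _)
        (Continuous.continuousOn (by fun_prop))
    refine hcov.integrable_of_integral_norm_bounded (L ⟨_, hWLG⟩) hloc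
      (Eventually.of_forall fun n => ?_)
    have hcont : Continuous (fun p : Euc d × Euc d => (1 + ‖p‖) * chi n p) :=
      (by fun_prop : Continuous fun p : Euc d × Euc d => 1 + ‖p‖).mul (chi_cont n)
    have e1 := hlam (fun p => (1 + ‖p‖) * chi n p) (hchi _ n hWLG) hcont (chi_supp _ n)
    have e2 : L ⟨_, hchi _ n hWLG⟩ ≤ L ⟨_, hWLG⟩ := hmono _ _ fun p =>
      mul_le_of_le_one_right (by positivity) (chi_le_one n p)
    rw [← e1] at e2
    refine le_trans ?_ e2
    rw [← integral_indicator Metric.isClosed_closedBall.measurableSet]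
    refine integral_mono ?_ (hcont.integrable_of_hasCompactSupport (chi_supp _ n)) fun p => ?_
    · exact (integrable_indicator_iff Metric.isClosed_closedBall.measurableSet).2 (hloc n).norm
    · by_cases hp : p ∈ Metric.closedBall (0 : Euc d × Euc d) n
      · rw [Set.indicator_of_mem hp]
        rw [mem_closedBall_zero_iff] at hp
        simp only [chi_eq_one hp, mul_one]
        rw [Real.norm_eq_abs, abs_of_nonneg (by positivity)]
      · rw [Set.indicator_of_notMem hp]
        exact mul_nonneg (by positivity) (chi_nonneg n p)
  have hmain : ∀ (f : Euc d × Euc d → ℝ) (h : LG f), Continuous f →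
      ∫ p, f p ∂lam = L ⟨f, h⟩ := by
    intro f h hf
    obtain ⟨C, hC⟩ := id h
    have lim1 : Tendsto (fun n => ∫ p, f p * chi n p ∂lam) atTop (𝓝 (∫ p, f p ∂lam)) := by
      refine tendsto_integral_of_dominated_convergence (fun p => C * (1 + ‖p‖))
        (fun n => (hf.mul (chi_cont n)).aestronglyMeasurable) (hW.const_mul C) (fun n => ?_) ?_
      · refine Eventually.of_forall fun p => ?_
        rw [Real.norm_eq_abs, abs_mul, abs_of_nonneg (chi_nonneg n p)]
        exact (mul_le_of_le_one_right (abs_nonneg _) (chi_le_one n p)).trans (hC p)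
      · refine Eventually.of_forall fun p => ?_
        obtain ⟨N, hN⟩ := exists_nat_ge ‖p‖
        refine tendsto_const_nhds.congr' ?_
        filter_upwards [eventually_ge_atTop N] with n hn
        have : (N : ℝ) ≤ n := by exact_mod_cast hn
        rw [chi_eq_one (hN.trans this), mul_one]
    have lim2 : Tendsto (fun n => L ⟨_, hchi f n h⟩) atTop (𝓝 (L ⟨f, h⟩)) := by
      have hT : Tendsto (fun n => C * (∫ x, tail n x ∂μ + ∫ x, tail n x ∂ν)) atTop (𝓝 0) := by
        simpa using ((tail_tendsto hμ).add (tail_tendsto hν)).const_mul C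
      have key : ∀ n (g k : growthSub (Euc d × Euc d)),
          (∀ p, g.1 p - k.1 p ≤ C * ((1 + ‖p‖) * (1 - chi n p))) →
          L g - L k ≤ C * (∫ x, tail n x ∂μ + ∫ x, tail n x ∂ν) := by
        intro n g k hgk
        have hC0 : 0 ≤ C := by
          have := (abs_nonneg _).trans (hC 0)
          simpa using this
        have e := hmono (g - k) (C • (⟨_, (tail_LG n).fst⟩ + ⟨_, (tail_LG n).snd⟩)) fun p =>
          (hgk p).trans (mul_le_mul_of_nonneg_left (tail_bound n p) hC0)
        rw [map_sub, map_smul, map_add, hL1 _ (tail_LG n) (tail_meas n), hL2 _ (tail_LG n) (tail_meas n)] at e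
        simpa using e
      rw [tendsto_iff_norm_sub_tendsto_zero]
      refine squeeze_zero (fun n => norm_nonneg _) (fun n => ?_) hT
      rw [Real.norm_eq_abs, abs_sub_le_iff]
      have hb : ∀ p, |f p| * (1 - chi n p) ≤ C * ((1 + ‖p‖) * (1 - chi n p)) := fun p => by
        rw [← mul_assoc]
        exact mul_le_mul_of_nonneg_right (hC p) (by linarith [chi_le_one n p])
      constructor
      · refine key n _ _ fun p => le_trans ?_ (hb p)
        have := mul_le_mul_of_nonneg_right (neg_abs_le (f p))
          (by linarith [chi_le_one n p] : 0 ≤ 1 - chi n p)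
        show f p * chi n p - f p ≤ _
        linarith
      · refine key n _ _ fun p => le_trans ?_ (hb p)
        have := mul_le_mul_of_nonneg_right (le_abs_self (f p))
          (by linarith [chi_le_one n p] : 0 ≤ 1 - chi n p)
        show f p - f p * chi n p ≤ _
        linarith
    have heq : (fun n => ∫ p, f p * chi n p ∂lam) = fun n => L ⟨_, hchi f n h⟩ :=
      funext fun n => hlam _ _ (hf.mul (chi_cont n)) (chi_supp f n)
    rw [heq] at lim1
    exact tendsto_nhds_unique lim1 lim2
  refine ⟨lam, hW, fun u hu hc => ?_, fun u hu hc => ?_, fun a ha h => ?_⟩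
  · rw [hmain _ hu.fst (hc.comp continuous_fst), hL1 _ hu hc.measurable]
  · rw [hmain _ hu.snd (hc.comp continuous_snd), hL2 _ hu hc.measurable]
  · rw [hmain _ h (by fun_prop), hL3]

theorem setInt_zero {d : ℕ} {lam : Measure (Euc d × Euc d)} [IsFiniteMeasure lam]
    (hint : Integrable (fun p : Euc d × Euc d => p.2 - p.1) lam)
    (h : ∀ a : Euc d → Euc d, Continuous a →
      LG (fun p : Euc d × Euc d => ⟪a p.1, p.2 - p.1⟫) →
        ∫ p, ⟪a p.1, p.2 - p.1⟫ ∂lam = 0) (B : Set (Euc d)) (hB : MeasurableSet B) :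
    ∫ p in Prod.fst ⁻¹' B, (p.2 - p.1) ∂lam = 0 := by
  have hcl : ∀ F : Set (Euc d), IsClosed F → ∫ p in Prod.fst ⁻¹' F, (p.2 - p.1) ∂lam = 0 := by
    intro F hF
    have hpos : ∀ n : ℕ, (0 : ℝ) < 1 / ((n : ℝ) + 1) := fun n => by positivity
    have hlim := thickenedIndicator_tendsto_indicator_closure hpos
      tendsto_one_div_add_atTop_nhds_zero_nat F
    rw [hF.closure_eq, tendsto_pi_nhds] at hlim
    set θ : ℕ → Euc d → ℝ := fun n x => (thickenedIndicator (hpos n) F x : ℝ) with hθ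
    have hθc : ∀ n, Continuous (θ n) := fun n =>
      NNReal.continuous_coe.comp (thickenedIndicator (hpos n) F).continuous
    have hθ0 : ∀ n x, 0 ≤ θ n x := fun n x => NNReal.coe_nonneg _
    have hθ1 : ∀ n x, θ n x ≤ 1 := fun n x => by
      rw [← NNReal.coe_one]
      exact NNReal.coe_le_coe.2 (thickenedIndicator_le_one (hpos n) F x)
    have hbd : ∀ n (p : Euc d × Euc d), ‖θ n p.1 • (p.2 - p.1)‖ ≤ ‖p.2 - p.1‖ := fun n p => by
      rw [norm_smul, Real.norm_eq_abs, abs_of_nonneg (hθ0 n _)]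
      exact mul_le_of_le_one_left (norm_nonneg _) (hθ1 n _)
    have hmeas : ∀ n, AEStronglyMeasurable (fun p : Euc d × Euc d => θ n p.1 • (p.2 - p.1)) lam :=
      fun n => (((hθc n).comp continuous_fst).smul
        (continuous_snd.sub continuous_fst)).aestronglyMeasurable
    have hz : ∀ n, ∫ p, θ n p.1 • (p.2 - p.1) ∂lam = 0 := by
      intro n
      have hi : Integrable (fun p : Euc d × Euc d => θ n p.1 • (p.2 - p.1)) lam :=
        hint.norm.mono' (hmeas n) (Eventually.of_forall (hbd n))
      refine ext_inner_left ℝ fun w => ?_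
      rw [inner_zero_right, ← integral_inner hi w]
      have := h (fun x => θ n x • w) (by have := hθc n; fun_prop) ?_
      · rw [← this]
        congr 1
        ext p
        rw [inner_smul_left, inner_smul_right]; rfl
      · refine ⟨2 * ‖w‖, fun p => ?_⟩
        have e1 := abs_real_inner_le_norm (θ n p.1 • w) (p.2 - p.1)
        have e2 : ‖θ n p.1 • w‖ ≤ ‖w‖ := by
          rw [norm_smul, Real.norm_eq_abs, abs_of_nonneg (hθ0 n _)]
          exact mul_le_of_le_one_left (norm_nonneg _) (hθ1 n _)
        have e3 : ‖p.2 - p.1‖ ≤ 2 * (1 + ‖p‖) := by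
          have := norm_sub_le p.2 p.1
          linarith [norm_fst_le p, norm_snd_le p]
        refine e1.trans ((mul_le_mul e2 e3 (norm_nonneg _) (norm_nonneg _)).trans (le_of_eq ?_))
        ring
    have hdct : Tendsto (fun n => ∫ p, θ n p.1 • (p.2 - p.1) ∂lam) atTop
        (𝓝 (∫ p, (Prod.fst ⁻¹' F).indicator (fun p : Euc d × Euc d => p.2 - p.1) p ∂lam)) := by
      refine tendsto_integral_of_dominated_convergence _ hmeas hint.norm
        (fun n => Eventually.of_forall (hbd n)) (Eventually.of_forall fun p => ?_)
      have e1 : Tendsto (fun n => θ n p.1) atTop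
          (𝓝 ((F.indicator (fun _ => (1 : NNReal)) p.1 : NNReal) : ℝ)) :=
        (NNReal.continuous_coe.tendsto _).comp (hlim p.1)
      have e2 := e1.smul_const (p.2 - p.1)
      have e3 : (Prod.fst ⁻¹' F).indicator (fun p : Euc d × Euc d => p.2 - p.1) p =
          ((F.indicator (fun _ => (1 : NNReal)) p.1 : NNReal) : ℝ) • (p.2 - p.1) := by
        by_cases hp : p.1 ∈ F
        · rw [Set.indicator_of_mem hp, Set.indicator_of_mem (show p ∈ Prod.fst ⁻¹' F from hp),
            NNReal.coe_one, one_smul]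
        · rw [Set.indicator_of_notMem hp,
            Set.indicator_of_notMem (show p ∉ Prod.fst ⁻¹' F from hp), NNReal.coe_zero, zero_smul]
      rw [e3]
      exact e2
    simp only [hz] at hdct
    rw [integral_indicator (measurable_fst hF.measurableSet)] at hdct
    exact tendsto_nhds_unique hdct tendsto_const_nhds
  have hgen : (inferInstance : MeasurableSpace (Euc d)) =
      MeasurableSpace.generateFrom {s : Set (Euc d) | IsClosed s} :=
    BorelSpace.measurable_eq.trans borel_eq_generateFrom_isClosed
  induction B, hB using MeasurableSpace.induction_on_inter hgen isPiSystem_isClosed with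
  | empty => simp
  | basic t ht => exact hcl t ht
  | compl t ht ih =>
    have e1 := integral_add_compl (measurable_fst (β := Euc d) ht) hint
    have e2 := hcl Set.univ isClosed_univ
    rw [Set.preimage_univ, setIntegral_univ] at e2
    rw [ih, e2, zero_add] at e1
    exact e1
  | iUnion f hd hf ih =>
    rw [Set.preimage_iUnion, integral_iUnion (fun i => measurable_fst (hf i))
      (fun i j hij => (hd hij).preimage _) hint.integrableOn]
    simp [ih]

theorem hard {d : ℕ} {μ ν : Measure (Euc d)}
    [IsProbabilityMeasure μ] [IsProbabilityMeasure ν]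
    (hμ : FiniteFirstMoment μ) (hν : FiniteFirstMoment ν) (hcx : ConvexOrder μ ν) :
    ∃ lam : Measure (Euc d × Euc d), IsProbabilityMeasure lam ∧
        IsCoupling lam μ ν ∧ IsMartingaleCoupling lam := by
  obtain ⟨lam, hW, h1, h2, h3⟩ := exists_measure hμ hν hcx
  have hfin : IsFiniteMeasure lam := by
    have : Integrable (fun _ : Euc d × Euc d => (1 : ℝ)) lam :=
      hW.mono' aestronglyMeasurable_const (Eventually.of_forall fun p => by simp)
    rcases (integrable_const_iff.1 this) with h | h
    · norm_num at h
    · exact h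
  have hbLG : ∀ f : BoundedContinuousFunction (Euc d) ℝ, LG f := fun f =>
    LG.of_bdd (fun x => f.norm_coe_le_norm x)
  have m1 : lam.map Prod.fst = μ := by
    refine ext_of_forall_integral_eq_of_IsFiniteMeasure fun f => ?_
    rw [integral_map measurable_fst.aemeasurable f.continuous.aestronglyMeasurable]
    exact h1 f (hbLG f) f.continuous
  have m2 : lam.map Prod.snd = ν := by
    refine ext_of_forall_integral_eq_of_IsFiniteMeasure fun f => ?_
    rw [integral_map measurable_snd.aemeasurable f.continuous.aestronglyMeasurable]
    exact h2 f (hbLG f) f.continuous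
  have hprob : IsProbabilityMeasure lam := by
    constructor
    rw [← Set.preimage_univ (f := Prod.fst), ← Measure.map_apply measurable_fst MeasurableSet.univ,
      m1, measure_univ]
  have i1 : Integrable (fun p : Euc d × Euc d => p.1) lam :=
    hW.mono' continuous_fst.aestronglyMeasurable
      (Eventually.of_forall fun p => by linarith [norm_fst_le p])
  have i2 : Integrable (fun p : Euc d × Euc d => p.2) lam :=
    hW.mono' continuous_snd.aestronglyMeasurable
      (Eventually.of_forall fun p => by linarith [norm_snd_le p])
  refine ⟨lam, hprob, ⟨m1, m2⟩, ?_⟩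
  have hm : fstSigma d ≤ (inferInstance : MeasurableSpace (Euc d × Euc d)) :=
    measurable_fst.comap_le
  unfold IsMartingaleCoupling
  refine (ae_eq_condExp_of_forall_setIntegral_eq hm i2 (fun s _ _ => i1.integrableOn) ?_ ?_).symm
  · rintro s ⟨B, hB, rfl⟩ -
    have := setInt_zero (i2.sub i1) h3 B hB
    rw [integral_sub i2.integrableOn i1.integrableOn] at this
    exact (sub_eq_zero.1 this).symm
  · have : Measurable[fstSigma d] (fun p : Euc d × Euc d => p.1) := comap_measurable _
    exact this.stronglyMeasurable.aestronglyMeasurable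

theorem easy {d : ℕ} {μ ν : Measure (Euc d)} (hν : FiniteFirstMoment ν)
    {lam : Measure (Euc d × Euc d)} [IsProbabilityMeasure lam]
    (hc : IsCoupling lam μ ν) (hM : IsMartingaleCoupling lam) : ConvexOrder μ ν := by
  intro φ hφ i1 i2
  have hcont : Continuous φ := by
    rw [← continuousOn_univ]; exact hφ.continuousOn isOpen_univ
  obtain ⟨rfl, rfl⟩ := hc
  have hm : fstSigma d ≤ (inferInstance : MeasurableSpace (Euc d × Euc d)) :=
    measurable_fst.comap_le
  have j1 : Integrable (fun p : Euc d × Euc d => φ p.1) lam := i1.comp_measurable measurable_fst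
  have j2 : Integrable (φ ∘ fun p : Euc d × Euc d => p.2) lam := i2.comp_measurable measurable_snd
  have j3 : Integrable (fun p : Euc d × Euc d => p.2) lam :=
    Integrable.comp_measurable (f := Prod.snd) hν measurable_snd
  have hJ := hφ.map_condExp_le_univ hm hcont.lowerSemicontinuous j3 j2
  rw [integral_map measurable_fst.aemeasurable hcont.aestronglyMeasurable,
    integral_map measurable_snd.aemeasurable hcont.aestronglyMeasurable]
  have e : ∫ p, φ p.2 ∂lam = ∫ p, (lam[φ ∘ (fun p : Euc d × Euc d => p.2) | fstSigma d]) p ∂lam :=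
    (integral_condExp hm).symm
  rw [e]
  refine integral_mono_ae j1 integrable_condExp ?_
  filter_upwards [hJ, hM] with p hp hq
  rw [Function.comp_apply, hq] at hp
  exact hp

end Strassen

/-- Strassen's theorem (convex order): μ ≤cx ν iff there is a martingale coupling. -/
theorem strassen_martingale_coupling
    (d : ℕ) (hd : 1 ≤ d) (μ ν : Measure (Euc d))
    [IsProbabilityMeasure μ] [IsProbabilityMeasure ν]
    (hμ : FiniteFirstMoment μ) (hν : FiniteFirstMoment ν) :
    ConvexOrder μ ν ↔
      ∃ lam : Measure (Euc d × Euc d), IsProbabilityMeasure lam ∧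
        IsCoupling lam μ ν ∧ IsMartingaleCoupling lam := by
  constructor
  · exact Strassen.hard hμ hν
  · rintro ⟨lam, hp, hc, hM⟩
    exact Strassen.easy hν hc hM
end
end

section
/- Let d ≥ 1 and let μ and ν be Borel probability measures on ℝ^d with finite first moments. Then μ ≤icx ν if and only if there exists a coupling λ of μ and ν that is a submartingale coupling. -/
open MeasureTheory ProbabilityTheory Filter

noncomputable section

lemma key_nonneg {d : ℕ} {μ ν : Measure (Euc d)}
    [IsProbabilityMeasure μ] [IsProbabilityMeasure ν]
    (hμ : FiniteFirstMoment μ) (hν : FiniteFirstMoment ν) (h : IncConvexOrder μ ν)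
    (f g : Euc d → ℝ) (hf : Integrable f μ) (hg : Integrable g ν)
    (b : Euc d → Fin d → ℝ) (B : ℝ) (hb : ∀ x i, 0 ≤ b x i ∧ b x i ≤ B)
    (hfg : ∀ x y : Euc d, ∑ i, b x i * (y i - x i) ≤ f x + g y) :
    0 ≤ ∫ x, f x ∂μ + ∫ y, g y ∂ν := by
  set a : Euc d → Euc d → ℝ := fun x y => ∑ i, b x i * (y i - x i) - f x with ha
  set φ : Euc d → ℝ := fun y => ⨆ x, a x y with hφ
  have hbdd : ∀ y, BddAbove (Set.range fun x => a x y) := by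
    intro y
    refine ⟨g y, ?_⟩
    rintro _ ⟨x, rfl⟩
    have := hfg x y
    simp only [ha]; linarith
  have hle : ∀ y, φ y ≤ g y := fun y => ciSup_le fun x => by
    have := hfg x y
    simp only [ha]; linarith
  have hge : ∀ x y, a x y ≤ φ y := fun x y => le_ciSup (hbdd y) x
  have hgef : ∀ x, - f x ≤ φ x := fun x => by
    have := hge x x
    simpa [ha] using this
  have hconv : ConvexOn ℝ Set.univ φ := by
    refine ⟨convex_univ, ?_⟩
    intro y _ z _ s t hs ht hst
    refine ciSup_le fun x => ?_
    have e : a x (s • y + t • z) = s * a x y + t * a x z := by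
      simp only [ha, PiLp.add_apply, PiLp.smul_apply, smul_eq_mul]
      have : f x = s * f x + t * f x := by rw [← add_mul, hst, one_mul]
      rw [mul_sub, mul_sub, Finset.mul_sum, Finset.mul_sum]
      have e2 : ∑ i, b x i * (s * y i + t * z i - x i)
          = ∑ i, s * (b x i * (y i - x i)) + ∑ i, t * (b x i * (z i - x i)) := by
        rw [← Finset.sum_add_distrib]
        refine Finset.sum_congr rfl fun i _ => ?_
        have : x i = s * x i + t * x i := by rw [← add_mul, hst, one_mul]
        linear_combination (-b x i) * this
      rw [e2]
      linarith
    rw [e, smul_eq_mul, smul_eq_mul]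
    have := mul_le_mul_of_nonneg_left (hge x y) hs
    have := mul_le_mul_of_nonneg_left (hge x z) ht
    linarith
  have hmono : CoordMono φ := by
    intro y z hyz
    refine ciSup_le fun x => le_trans ?_ (hge x z)
    simp only [ha]
    gcongr with i
    · exact (hb x i).1
    · exact hyz i
  have hlip : ∀ y z, φ y ≤ φ z + (d * |B|) * ‖y - z‖ := by
    intro y z
    refine ciSup_le fun x => ?_
    have h1 := hge x z
    have h2 : a x y = a x z + ∑ i, b x i * (y i - z i) := by
      have : ∑ i, b x i * (y i - x i)
          = ∑ i, b x i * (z i - x i) + ∑ i, b x i * (y i - z i) := by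
        rw [← Finset.sum_add_distrib]
        exact Finset.sum_congr rfl fun i _ => by ring
      simp only [ha]; linarith
    have h3 : ∑ i, b x i * (y i - z i) ≤ ∑ _i : Fin d, |B| * ‖y - z‖ := by
      refine Finset.sum_le_sum fun i _ => ?_
      have hn : |y i - z i| ≤ ‖y - z‖ := by
        simpa using PiLp.norm_apply_le (y - z) i
      calc b x i * (y i - z i) ≤ b x i * |y i - z i| :=
            mul_le_mul_of_nonneg_left (le_abs_self _) (hb x i).1
        _ ≤ |B| * ‖y - z‖ :=
            mul_le_mul ((hb x i).2.trans (le_abs_self _)) hn (abs_nonneg _) (abs_nonneg _)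
    simp at h3
    linarith
  have hcont : Continuous φ := by
    have : LocallyLipschitz φ := hconv.locallyLipschitz
    exact this.continuous
  have hint : ∀ ρ : Measure (Euc d), IsProbabilityMeasure ρ → FiniteFirstMoment ρ →
      Integrable φ ρ := by
    intro ρ _ hρ
    have hi : Integrable (fun y : Euc d => |φ 0| + (d * |B|) * ‖y‖) ρ :=
      (integrable_const _).add ((Integrable.norm hρ).const_mul _)
    refine hi.mono' hcont.aestronglyMeasurable (ae_of_all _ fun y => ?_)
    have h1 := hlip y 0
    have h2 := hlip 0 y
    simp only [sub_zero, zero_sub, norm_neg] at h1 h2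
    rw [Real.norm_eq_abs, abs_le]
    constructor <;> linarith [le_abs_self (φ 0), neg_abs_le (φ 0)]
  have i1 := hint μ inferInstance hμ
  have i2 := hint ν inferInstance hν
  have h1 := h φ hconv hmono i1 i2
  have h2 : ∫ y, φ y ∂ν ≤ ∫ y, g y ∂ν := integral_mono i2 hg hle
  have h3 : ∫ x, - f x ∂μ ≤ ∫ x, φ x ∂μ := integral_mono hf.neg i1 hgef
  rw [integral_neg] at h3
  linarith

def IntSub {d : ℕ} (μ : Measure (Euc d)) : Submodule ℝ (Euc d → ℝ) where
  carrier := {f | Integrable f μ}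
  add_mem' := fun h1 h2 => Integrable.add h1 h2
  zero_mem' := integrable_zero _ _ _
  smul_mem' := fun c _ h => Integrable.smul c h

def GrowSub (d : ℕ) : Submodule ℝ (Euc d × Euc d → ℝ) where
  carrier := {h | ∃ C : ℝ, ∀ x y, |h (x, y)| ≤ C * (1 + ‖x‖ + ‖y‖)}
  add_mem' := by
    rintro h k ⟨C, hC⟩ ⟨D, hD⟩
    refine ⟨C + D, fun x y => ?_⟩
    have := abs_add_le (h (x, y)) (k (x, y))
    have := hC x y
    have := hD x y
    simp only [Pi.add_apply]
    linarith
  zero_mem' := ⟨0, by simp⟩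
  smul_mem' := by
    rintro c h ⟨C, hC⟩
    refine ⟨|c| * C, fun x y => ?_⟩
    simp only [Pi.smul_apply, smul_eq_mul, abs_mul]
    have := mul_le_mul_of_nonneg_left (hC x y) (abs_nonneg c)
    linarith

def SubCone {d : ℕ} (μ ν : Measure (Euc d)) :
    PointedCone ℝ (IntSub μ × IntSub ν × GrowSub d) where
  carrier := {e | ∃ (b : Euc d → Fin d → ℝ) (B : ℝ), (∀ x i, 0 ≤ b x i ∧ b x i ≤ B) ∧
    ∀ x y : Euc d, ∑ i, b x i * (y i - x i) ≤ e.1.1 x + e.2.1.1 y + e.2.2.1 (x, y)}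
  add_mem' := by
    rintro e e' ⟨b, B, hb, h⟩ ⟨b', B', hb', h'⟩
    refine ⟨fun x i => b x i + b' x i, B + B', fun x i =>
      ⟨add_nonneg (hb x i).1 (hb' x i).1, add_le_add (hb x i).2 (hb' x i).2⟩, fun x y => ?_⟩
    have := h x y
    have := h' x y
    simp only [add_mul, Finset.sum_add_distrib, Prod.fst_add, Prod.snd_add, Submodule.coe_add,
      Pi.add_apply]
    linarith
  zero_mem' := ⟨0, 0, by simp, by simp⟩
  smul_mem' := by
    rintro c e ⟨b, B, hb, h⟩
    refine ⟨fun x i => c * b x i, c * B, fun x i =>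
      ⟨mul_nonneg c.2 (hb x i).1, mul_le_mul_of_nonneg_left (hb x i).2 c.2⟩, fun x y => ?_⟩
    have := mul_le_mul_of_nonneg_left (h x y) c.2
    have e1 : (c • e).1.1 x = c * e.1.1 x := rfl
    have e2 : (c • e).2.1.1 y = c * e.2.1.1 y := rfl
    have e3 : (c • e).2.2.1 (x, y) = c * e.2.2.1 (x, y) := rfl
    rw [e1, e2, e3]
    simp only [mul_assoc]
    rw [← Finset.mul_sum]
    linarith

def IntLin {d : ℕ} (μ : Measure (Euc d)) : IntSub μ →ₗ[ℝ] ℝ where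
  toFun f := ∫ x, f.1 x ∂μ
  map_add' f g := integral_add f.2 g.2
  map_smul' c f := integral_smul c f.1

lemma exists_functional {d : ℕ} {μ ν : Measure (Euc d)}
    [IsProbabilityMeasure μ] [IsProbabilityMeasure ν]
    (hμ : FiniteFirstMoment μ) (hν : FiniteFirstMoment ν) (h : IncConvexOrder μ ν) :
    ∃ L : GrowSub d →ₗ[ℝ] ℝ, ∀ (f g : Euc d → ℝ) (h : GrowSub d), Integrable f μ →
      Integrable g ν → ∀ (b : Euc d → Fin d → ℝ) (B : ℝ), (∀ x i, 0 ≤ b x i ∧ b x i ≤ B) →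
      (∀ x y : Euc d, ∑ i, b x i * (y i - x i) ≤ f x + g y + h.1 (x, y)) →
      0 ≤ ∫ x, f x ∂μ + ∫ y, g y ∂ν + L h := by
  let T : (IntSub μ × IntSub ν × GrowSub d) →ₗ[ℝ] ℝ :=
    (IntLin μ).comp (LinearMap.fst ℝ _ _) +
      (IntLin ν).comp ((LinearMap.fst ℝ _ _).comp (LinearMap.snd ℝ _ _))
  let D : Submodule ℝ (IntSub μ × IntSub ν × GrowSub d) :=
    LinearMap.ker ((LinearMap.snd ℝ _ _).comp (LinearMap.snd ℝ _ _))
  obtain ⟨G, hG, hpos⟩ := riesz_extension (SubCone μ ν) (⟨D, T.domRestrict D⟩ : _ →ₗ.[ℝ] ℝ)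
    (by
      rintro ⟨⟨f, g, k⟩, hk⟩ ⟨b, B, hb, hh⟩
      have hk0 : k = 0 := hk
      subst hk0
      refine key_nonneg hμ hν h f.1 g.1 f.2 g.2 b B hb fun x y => ?_
      simpa using hh x y)
    (by
      rintro ⟨f, g, k⟩
      obtain ⟨C, hC⟩ := k.2
      have i1 : Integrable (fun x : Euc d => C * (1 + ‖x‖)) μ :=
        ((integrable_const _).add (Integrable.norm hμ)).const_mul _
      have i2 : Integrable (fun x : Euc d => C * ‖x‖) ν := (Integrable.norm hν).const_mul _
      let f' : IntSub μ := ⟨_, i1⟩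
      let g' : IntSub ν := ⟨_, i2⟩
      refine ⟨⟨(f' - f, g' - g, 0), ?_⟩, 0, 0, by simp, fun x y => ?_⟩
      · simp [D]
      · have e : ((f' - f, g' - g, (0 : GrowSub d)) + (f, g, k)) = (f', g', k) := by
          simp
        simp only [e]
        have := (abs_le.1 (hC x y)).1
        simp [f', g']
        linarith)
  refine ⟨G.comp ((LinearMap.inr ℝ _ _).comp (LinearMap.inr ℝ _ _)), ?_⟩
  intro f g k hf hg b B hb hh
  have h1 := hpos (⟨f, hf⟩, ⟨g, hg⟩, k) ⟨b, B, hb, hh⟩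
  have h2 := hG ⟨(⟨f, hf⟩, ⟨g, hg⟩, 0), by simp [D]⟩
  have h3 : T (⟨f, hf⟩, ⟨g, hg⟩, 0) = ∫ x, f x ∂μ + ∫ y, g y ∂ν := rfl
  have h4 : ((⟨f, hf⟩, ⟨g, hg⟩, k) : (IntSub μ × IntSub ν × GrowSub d))
    = (⟨f, hf⟩, ⟨g, hg⟩, 0) + (0, 0, k) := by simp
  rw [h4, map_add] at h1
  have h5 : G (⟨f, hf⟩, ⟨g, hg⟩, 0) = ∫ x, f x ∂μ + ∫ y, g y ∂ν := by
    rw [← h3]; exact h2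
  rw [h5] at h1
  exact h1

def cutoff {d : ℕ} (n : ℕ) (x : Euc d) : ℝ := max 0 (min 1 (n + 1 - ‖x‖))

lemma cutoff_nonneg {d : ℕ} (n : ℕ) (x : Euc d) : 0 ≤ cutoff n x := le_max_left _ _

lemma cutoff_le_one {d : ℕ} (n : ℕ) (x : Euc d) : cutoff n x ≤ 1 :=
  max_le zero_le_one (min_le_left _ _)

lemma cutoff_continuous {d : ℕ} (n : ℕ) : Continuous (cutoff n : Euc d → ℝ) := by
  unfold cutoff; fun_prop

lemma cutoff_mono {d : ℕ} (x : Euc d) : Monotone fun n => cutoff n x := by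
  intro n m hnm
  have : (n : ℝ) ≤ m := by exact_mod_cast hnm
  simp only [cutoff]
  gcongr

lemma cutoff_eq_one {d : ℕ} (x : Euc d) : ∀ᶠ n : ℕ in atTop, cutoff n x = 1 := by
  filter_upwards [eventually_ge_atTop ⌈‖x‖⌉₊] with n hn
  have : ‖x‖ ≤ n := Nat.ceil_le.1 hn
  simp only [cutoff]
  rw [min_eq_left (by linarith), max_eq_right zero_le_one]

lemma cutoff_eq_zero {d : ℕ} (n : ℕ) (x : Euc d) (hx : (n : ℝ) + 1 < ‖x‖) : cutoff n x = 0 := by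
  simp only [cutoff]
  rw [max_eq_left]
  exact (min_le_right _ _).trans (by linarith)

lemma cutoff_tendsto {d : ℕ} (x : Euc d) :
    Tendsto (fun n => cutoff n x) atTop (nhds 1) :=
  tendsto_const_nhds.congr' ((cutoff_eq_one x).mono fun _ h => h.symm)

lemma cutoff_integral_tendsto {d : ℕ} (μ : Measure (Euc d)) [IsProbabilityMeasure μ] :
    Tendsto (fun n => ∫ x, cutoff n x ∂μ) atTop (nhds 1) := by
  have : Tendsto (fun n => ∫ x, cutoff n x ∂μ) atTop (nhds (∫ _x, (1 : ℝ) ∂μ)) := by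
    refine tendsto_integral_of_dominated_convergence (fun _ => 1)
      (fun n => (cutoff_continuous n).aestronglyMeasurable) (integrable_const _)
      (fun n => ae_of_all _ fun x => ?_) (ae_of_all _ cutoff_tendsto)
    rw [Real.norm_eq_abs, abs_of_nonneg (cutoff_nonneg n x)]
    exact cutoff_le_one n x
  simpa using this

lemma cutoff_integrable {d : ℕ} (n : ℕ) (μ : Measure (Euc d)) [IsProbabilityMeasure μ] :
    Integrable (cutoff n) μ :=
  Integrable.of_bound (cutoff_continuous n).aestronglyMeasurable 1 (ae_of_all _ fun x => by
    rw [Real.norm_eq_abs, abs_of_nonneg (cutoff_nonneg n x)]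
    exact cutoff_le_one n x)

lemma cutoff_compact {d : ℕ} (n : ℕ) (h : Euc d × Euc d → ℝ) :
    HasCompactSupport (fun p : Euc d × Euc d => h p * (cutoff n p.1 * cutoff n p.2)) := by
  refine HasCompactSupport.intro
    ((isCompact_closedBall (0 : Euc d) (n + 1)).prod (isCompact_closedBall (0 : Euc d) (n + 1)))
    fun p hp => ?_
  have : (n : ℝ) + 1 < ‖p.1‖ ∨ (n : ℝ) + 1 < ‖p.2‖ := by
    by_contra hcon
    push Not at hcon
    exact hp ⟨by simpa using hcon.1, by simpa using hcon.2⟩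
  rcases this with h | h <;> simp [cutoff_eq_zero n _ h]

lemma mem_grow_of_bdd {d : ℕ} (h : Euc d × Euc d → ℝ) (M : ℝ) (hM : ∀ p, |h p| ≤ M) :
    h ∈ GrowSub d := by
  refine ⟨M, fun x y => ?_⟩
  have h0 : 0 ≤ M := (abs_nonneg _).trans (hM 0)
  have := hM (x, y)
  nlinarith [norm_nonneg x, norm_nonneg y, mul_nonneg h0 (norm_nonneg x),
    mul_nonneg h0 (norm_nonneg y)]

open CompactlySupported in
lemma mem_grow_of_cc {d : ℕ} (h : C_c(Euc d × Euc d, ℝ)) : (h : Euc d × Euc d → ℝ) ∈ GrowSub d := by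
  obtain ⟨C, hC⟩ := h.hasCompactSupport.exists_bound_of_continuous h.continuous
  exact mem_grow_of_bdd _ C hC

open CompactlySupported in
lemma exists_measure {d : ℕ} {μ ν : Measure (Euc d)}
    [IsProbabilityMeasure μ] [IsProbabilityMeasure ν]
    (hμ : FiniteFirstMoment μ) (hν : FiniteFirstMoment ν)
    (L : GrowSub d →ₗ[ℝ] ℝ) (hL : ∀ (f g : Euc d → ℝ) (h : GrowSub d), Integrable f μ →
      Integrable g ν → ∀ (b : Euc d → Fin d → ℝ) (B : ℝ), (∀ x i, 0 ≤ b x i ∧ b x i ≤ B) →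
      (∀ x y : Euc d, ∑ i, b x i * (y i - x i) ≤ f x + g y + h.1 (x, y)) →
      0 ≤ ∫ x, f x ∂μ + ∫ y, g y ∂ν + L h) :
    ∃ lam : Measure (Euc d × Euc d), IsProbabilityMeasure lam ∧ IsCoupling lam μ ν ∧
      ∀ h : GrowSub d, Continuous h.1 → Integrable h.1 lam ∧ ∫ p, h.1 p ∂lam = L h := by
  have hpos : ∀ h : GrowSub d, (∀ p, 0 ≤ h.1 p) → 0 ≤ L h := by
    intro h hh
    have := hL 0 0 h (integrable_zero _ _ _) (integrable_zero _ _ _) 0 0 (by simp)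
      (fun x y => by simpa using hh (x, y))
    simpa using this
  have hmono : ∀ h k : GrowSub d, (∀ p, h.1 p ≤ k.1 p) → L h ≤ L k := by
    intro h k hhk
    have := hpos (k - h) (fun p => by simpa using hhk p)
    rw [map_sub] at this
    linarith
  have hmarg : ∀ (h : GrowSub d) (f g : Euc d → ℝ), Integrable f μ → Integrable g ν →
      (∀ x y, h.1 (x, y) = f x + g y) → L h = ∫ x, f x ∂μ + ∫ y, g y ∂ν := by
    intro h f g hf hg hh
    have h1 := hL (-f) (-g) h hf.neg hg.neg 0 0 (by simp) (fun x y => by simp [hh x y]; linarith)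
    have h2 := hL f g (-h) hf hg 0 0 (by simp) (fun x y => by simp [hh x y])
    simp only [Pi.neg_apply, integral_neg, map_neg] at h1 h2
    linarith
  let Λ₀ : C_c(Euc d × Euc d, ℝ) →ₗ[ℝ] ℝ :=
    { toFun := fun h => L ⟨h, mem_grow_of_cc h⟩
      map_add' := fun h k => by rw [← map_add]; rfl
      map_smul' := fun c h => by rw [← map_smul]; rfl }
  let Λ : C_c(Euc d × Euc d, ℝ) →ₚ[ℝ] ℝ := PositiveLinearMap.mk₀ Λ₀ (fun h hh => hpos _ hh)
  let lam := RealRMK.rieszMeasure Λ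
  have hrep : ∀ (h : Euc d × Euc d → ℝ) (hc : Continuous h) (hs : HasCompactSupport h)
      (hg : h ∈ GrowSub d), Integrable h lam ∧ ∫ p, h p ∂lam = L ⟨h, hg⟩ := by
    intro h hc hs hg
    exact ⟨hc.integrable_of_hasCompactSupport hs,
      RealRMK.integral_rieszMeasure Λ ⟨⟨h, hc⟩, hs⟩⟩
  have hcut : ∀ (h : GrowSub d) (n : ℕ),
      (fun p : Euc d × Euc d => h.1 p * (cutoff n p.1 * cutoff n p.2)) ∈ GrowSub d := by
    intro h n
    obtain ⟨C, hC⟩ := h.2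
    refine ⟨C, fun x y => le_trans ?_ (hC x y)⟩
    have h0 := mul_nonneg (cutoff_nonneg n x) (cutoff_nonneg n y)
    rw [abs_mul, abs_of_nonneg h0]
    exact mul_le_of_le_one_right (abs_nonneg _)
      (mul_le_one₀ (cutoff_le_one n x) (cutoff_nonneg n y) (cutoff_le_one n y))
  have hcutc : ∀ (h : GrowSub d) (n : ℕ), Continuous h.1 →
      Continuous (fun p : Euc d × Euc d => h.1 p * (cutoff n p.1 * cutoff n p.2)) := by
    intro h n hc
    have := cutoff_continuous (d := d) n
    fun_prop
  have hA : ∀ h : GrowSub d, Continuous h.1 → (∀ p, 0 ≤ h.1 p) →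
      ∫⁻ p, ENNReal.ofReal (h.1 p) ∂lam ≤ ENNReal.ofReal (L h) := by
    intro h hc hh
    have ht : Tendsto (fun n : ℕ => ∫⁻ p, ENNReal.ofReal
        (h.1 p * (cutoff n p.1 * cutoff n p.2)) ∂lam) atTop
        (nhds (∫⁻ p, ENNReal.ofReal (h.1 p) ∂lam)) := by
      refine lintegral_tendsto_of_tendsto_of_monotone
        (fun n => ((hcutc h n hc).measurable.ennreal_ofReal).aemeasurable)
        (ae_of_all _ fun p n m hnm => ?_) (ae_of_all _ fun p => ?_)
      · refine ENNReal.ofReal_le_ofReal (mul_le_mul_of_nonneg_left ?_ (hh p))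
        exact mul_le_mul (cutoff_mono _ hnm) (cutoff_mono _ hnm) (cutoff_nonneg _ _)
          (cutoff_nonneg _ _)
      · refine (ENNReal.continuous_ofReal.tendsto _).comp ?_
        have := ((cutoff_tendsto p.1).mul (cutoff_tendsto p.2)).const_mul (h.1 p)
        simpa using this
    refine le_of_tendsto' ht fun n => ?_
    obtain ⟨i1, i2⟩ := hrep _ (hcutc h n hc) (cutoff_compact n h.1) (hcut h n)
    rw [← ofReal_integral_eq_lintegral_ofReal i1 (ae_of_all _ fun p => mul_nonneg (hh p)
      (mul_nonneg (cutoff_nonneg _ _) (cutoff_nonneg _ _))), i2]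
    refine ENNReal.ofReal_le_ofReal (hmono _ _ fun p => ?_)
    exact mul_le_of_le_one_right (hh p)
      (mul_le_one₀ (cutoff_le_one n _) (cutoff_nonneg n _) (cutoff_le_one n _))
  have hA' : ∀ h : GrowSub d, Continuous h.1 → (∀ p, 0 ≤ h.1 p) →
      Integrable h.1 lam ∧ ∫ p, h.1 p ∂lam ≤ L h := by
    intro h hc hh
    have h1 := hA h hc hh
    have hi : Integrable h.1 lam := by
      refine ⟨hc.aestronglyMeasurable, ?_⟩
      rw [hasFiniteIntegral_iff_ofReal (ae_of_all _ hh)]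
      exact h1.trans_lt ENNReal.ofReal_lt_top
    refine ⟨hi, ?_⟩
    rw [← ofReal_integral_eq_lintegral_ofReal hi (ae_of_all _ hh)] at h1
    exact (ENNReal.ofReal_le_ofReal_iff (hpos h hh)).1 h1
  have hconst : ∀ M : ℝ, (fun _ : Euc d × Euc d => M) ∈ GrowSub d := fun M =>
    mem_grow_of_bdd _ |M| fun _ => le_rfl
  have hLconst : ∀ M : ℝ, L ⟨_, hconst M⟩ = M := by
    intro M
    rw [hmarg ⟨_, hconst M⟩ (fun _ => M) (fun _ => 0) (integrable_const _) (integrable_const _)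
      (by simp)]
    simp
  have h1A := hA ⟨_, hconst 1⟩ continuous_const (by simp)
  rw [hLconst] at h1A
  simp only [ENNReal.ofReal_one, lintegral_one] at h1A
  have hfin : IsFiniteMeasure lam := ⟨h1A.trans_lt ENNReal.one_lt_top⟩
  have hprob : IsProbabilityMeasure lam := by
    refine ⟨le_antisymm h1A ?_⟩
    have hr : (1 : ℝ) ≤ lam.real Set.univ := by
      have ht : Tendsto (fun n => ∫ x, cutoff n x ∂μ + ∫ x, cutoff n x ∂ν - 1) atTop
          (nhds (1 + 1 - 1)) :=
        ((cutoff_integral_tendsto μ).add (cutoff_integral_tendsto ν)).sub_const 1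
      have ht' := le_of_tendsto' (b := lam.real Set.univ) ht (fun n => by
        obtain ⟨i1, i2⟩ := hrep _ (hcutc ⟨_, hconst 1⟩ n continuous_const)
          (cutoff_compact n _) (hcut ⟨_, hconst 1⟩ n)
        have h1 := hL (fun x => - cutoff n x) (fun x => 1 - cutoff n x)
          ⟨_, hcut ⟨_, hconst 1⟩ n⟩ (cutoff_integrable n μ).neg
          ((integrable_const _).sub (cutoff_integrable n ν)) 0 0 (by simp) (fun x y => by
            simp only [Pi.zero_apply, zero_mul, Finset.sum_const_zero, one_mul]
            nlinarith [mul_nonneg (sub_nonneg.2 (cutoff_le_one n x))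
              (sub_nonneg.2 (cutoff_le_one n y))])
        rw [← i2, integral_neg, integral_sub (integrable_const _) (cutoff_integrable n ν)] at h1
        have h2 : ∫ p : Euc d × Euc d, 1 * (cutoff n p.1 * cutoff n p.2) ∂lam
            ≤ ∫ _p, (1 : ℝ) ∂lam := by
          refine integral_mono i1 (integrable_const _) fun p => ?_
          simp only [one_mul]
          exact mul_le_one₀ (cutoff_le_one n _) (cutoff_nonneg n _) (cutoff_le_one n _)
        simp only [integral_const, smul_eq_mul, mul_one, probReal_univ] at h1 h2
        linarith)
      linarith
    rw [← ENNReal.ofReal_one]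
    rw [Measure.real] at hr
    exact (ENNReal.ofReal_le_iff_le_toReal (measure_ne_top _ _)).2 hr
  have hC : ∀ w h : GrowSub d, Continuous w.1 → Continuous h.1 → (∀ p, |h.1 p| ≤ w.1 p) →
      ∫ p, w.1 p ∂lam = L w → Integrable h.1 lam ∧ ∫ p, h.1 p ∂lam = L h := by
    intro w h wc hc hw hwi
    have iw := (hA' w wc fun p => (abs_nonneg _).trans (hw p)).1
    have ih : Integrable h.1 lam := iw.mono' hc.aestronglyMeasurable (ae_of_all _ hw)
    have h1 := (hA' (w + h) (wc.add hc) fun p => by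
      have := (abs_le.1 (hw p)).1
      simp only [Submodule.coe_add, Pi.add_apply]; linarith).2
    have h2 := (hA' (w - h) (wc.sub hc) fun p => by
      have := (abs_le.1 (hw p)).2
      simp only [Submodule.coe_sub, Pi.sub_apply]; linarith).2
    simp only [Submodule.coe_add, Pi.add_apply, Submodule.coe_sub, Pi.sub_apply, map_add,
      map_sub] at h1 h2
    rw [integral_add iw ih] at h1
    rw [integral_sub iw ih] at h2
    exact ⟨ih, by linarith⟩
  have hcoup : IsCoupling lam μ ν := by
    have hb : ∀ k : Euc d × Euc d → ℝ, Continuous k → ∀ M : ℝ, (∀ p, |k p| ≤ M) →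
        ∀ hk : k ∈ GrowSub d, ∫ p, k p ∂lam = L ⟨k, hk⟩ := by
      intro k kc M hM hk
      refine (hC ⟨_, hconst M⟩ ⟨k, hk⟩ continuous_const kc hM ?_).2
      rw [hLconst]; simp
    constructor
    · have := Measure.isProbabilityMeasure_map (μ := lam) (f := Prod.fst)
        measurable_fst.aemeasurable
      refine ext_of_forall_integral_eq_of_IsFiniteMeasure fun f => ?_
      rw [integral_map measurable_fst.aemeasurable f.continuous.aestronglyMeasurable]
      have hM : ∀ p : Euc d × Euc d, |f p.1| ≤ ‖f‖ := fun p => f.norm_coe_le_norm p.1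
      rw [hb (fun p => f p.1) (f.continuous.comp continuous_fst) ‖f‖ hM
        (mem_grow_of_bdd _ _ hM), hmarg _ f (fun _ => 0) (f.integrable μ) (integrable_const _)
        (by simp)]
      simp
    · have := Measure.isProbabilityMeasure_map (μ := lam) (f := Prod.snd)
        measurable_snd.aemeasurable
      refine ext_of_forall_integral_eq_of_IsFiniteMeasure fun f => ?_
      rw [integral_map measurable_snd.aemeasurable f.continuous.aestronglyMeasurable]
      have hM : ∀ p : Euc d × Euc d, |f p.2| ≤ ‖f‖ := fun p => f.norm_coe_le_norm p.2
      rw [hb (fun p => f p.2) (f.continuous.comp continuous_snd) ‖f‖ hM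
        (mem_grow_of_bdd _ _ hM), hmarg _ (fun _ => 0) f (integrable_const _) (f.integrable ν)
        (by simp)]
      simp
  refine ⟨lam, hprob, hcoup, fun h hc => ?_⟩
  obtain ⟨C, hCb⟩ := h.2
  have nf : Integrable (fun p : Euc d × Euc d => ‖p.1‖) lam := by
    have : Integrable (fun x : Euc d => ‖x‖) (lam.map Prod.fst) := by
      rw [hcoup.1]; exact Integrable.norm hμ
    exact this.comp_measurable measurable_fst
  have ns : Integrable (fun p : Euc d × Euc d => ‖p.2‖) lam := by
    have : Integrable (fun x : Euc d => ‖x‖) (lam.map Prod.snd) := by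
      rw [hcoup.2]; exact Integrable.norm hν
    exact this.comp_measurable measurable_snd
  have nfi : ∫ p, ‖p.1‖ ∂lam = ∫ x, ‖x‖ ∂μ := by
    rw [← hcoup.1, integral_map measurable_fst.aemeasurable continuous_norm.aestronglyMeasurable]
  have nsi : ∫ p, ‖p.2‖ ∂lam = ∫ x, ‖x‖ ∂ν := by
    rw [← hcoup.2, integral_map measurable_snd.aemeasurable continuous_norm.aestronglyMeasurable]
  have hw : (fun p : Euc d × Euc d => C * (1 + ‖p.1‖ + ‖p.2‖)) ∈ GrowSub d := by
    refine ⟨|C|, fun x y => ?_⟩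
    have : 0 ≤ 1 + ‖x‖ + ‖y‖ := by positivity
    rw [abs_mul, abs_of_nonneg this]
  refine hC ⟨_, hw⟩ h (show Continuous fun p : Euc d × Euc d => C * (1 + ‖p.1‖ + ‖p.2‖) by fun_prop) hc
    (fun p => hCb p.1 p.2) ?_
  have i1 : Integrable (fun x : Euc d => C * (1 + ‖x‖)) μ :=
    ((integrable_const _).add (Integrable.norm hμ)).const_mul _
  have i2 : Integrable (fun x : Euc d => C * ‖x‖) ν := (Integrable.norm hν).const_mul _
  rw [hmarg ⟨_, hw⟩ _ _ i1 i2 (fun x y => by simp; ring)]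
  have e1 : ∫ p : Euc d × Euc d, C * (1 + ‖p.1‖ + ‖p.2‖) ∂lam
      = C * (1 + ∫ x, ‖x‖ ∂μ + ∫ x, ‖x‖ ∂ν) := by
    have i3 : Integrable (fun p : Euc d × Euc d => 1 + ‖p.1‖) lam := (integrable_const _).add nf
    rw [integral_const_mul, integral_add i3 ns,
      integral_add (integrable_const _) nf, nfi, nsi]
    simp
  rw [e1, integral_const_mul, integral_const_mul,
    integral_add (integrable_const _) (Integrable.norm hμ)]
  simp
  ring

lemma easy_dir {d : ℕ} {μ ν : Measure (Euc d)}
    [IsProbabilityMeasure μ] [IsProbabilityMeasure ν]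
    (hν : FiniteFirstMoment ν) (lam : Measure (Euc d × Euc d)) [IsProbabilityMeasure lam]
    (hc : IsCoupling lam μ ν) (hs : IsSubmartingaleCoupling lam) : IncConvexOrder μ ν := by
  intro φ hconv hmono h1 h2
  obtain ⟨c1, c2⟩ := hc
  have hcont : Continuous φ := by
    have : LocallyLipschitz φ := hconv.locallyLipschitz
    exact this.continuous
  have hm : fstSigma d ≤ (inferInstance : MeasurableSpace (Euc d × Euc d)) := measurable_fst.comap_le
  have iY : Integrable (fun p : Euc d × Euc d => p.2) lam := by
    have : Integrable (fun x : Euc d => x) (lam.map Prod.snd) := by rw [c2]; exact hν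
    exact this.comp_measurable measurable_snd
  have iφY : Integrable (fun p : Euc d × Euc d => φ p.2) lam := by
    rw [← c2] at h2
    exact h2.comp_measurable measurable_snd
  have iφX : Integrable (fun p : Euc d × Euc d => φ p.1) lam := by
    rw [← c1] at h1
    exact h1.comp_measurable measurable_fst
  have J := hconv.map_condExp_le_of_finiteDimensional hm iY iφY
  have e1 : ∫ x, φ x ∂μ = ∫ p, φ p.1 ∂lam := by
    rw [← c1, integral_map measurable_fst.aemeasurable hcont.aestronglyMeasurable]
  have e2 : ∫ x, φ x ∂ν = ∫ p, φ p.2 ∂lam := by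
    rw [← c2, integral_map measurable_snd.aemeasurable hcont.aestronglyMeasurable]
  rw [e1, e2, ← integral_condExp hm (f := fun p : Euc d × Euc d => φ p.2)]
  refine integral_mono_ae iφX integrable_condExp ?_
  filter_upwards [J, hs] with p hp hp'
  exact (hmono _ _ hp').trans hp

lemma setIntegral_nonneg_of_cont {d : ℕ} (lam : Measure (Euc d × Euc d))
    [IsProbabilityMeasure lam] (D : Euc d × Euc d → ℝ) (hD : Integrable D lam)
    (hb : ∀ b : Euc d → ℝ, Continuous b → (∀ x, 0 ≤ b x ∧ b x ≤ 1) →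
      0 ≤ ∫ p, b p.1 * D p ∂lam) (A : Set (Euc d)) (hA : MeasurableSet A) :
    0 ≤ ∫ p in Prod.fst ⁻¹' A, D p ∂lam := by
  have hclosed : ∀ F : Set (Euc d), IsClosed F → 0 ≤ ∫ p in Prod.fst ⁻¹' F, D p ∂lam := by
    intro F hF
    rw [← integral_indicator (measurable_fst hF.measurableSet)]
    have ht : Tendsto (fun n : ℕ => ∫ p, (hF.apprSeq n p.1 : ℝ) * D p ∂lam) atTop
        (nhds (∫ p, (Prod.fst ⁻¹' F).indicator D p ∂lam)) := by
      have hcn : ∀ n, Continuous fun x => ((hF.apprSeq n x : NNReal) : ℝ) := fun n =>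
        NNReal.continuous_coe.comp (hF.apprSeq n).continuous
      refine tendsto_integral_of_dominated_convergence (fun p => ‖D p‖)
        (fun n => ((hcn n).comp continuous_fst).aestronglyMeasurable.mul hD.1) hD.norm
        (fun n => ae_of_all _ fun p => ?_) (ae_of_all _ fun p => ?_)
      · rw [norm_mul]
        refine mul_le_of_le_one_left (norm_nonneg _) ?_
        simpa using HasOuterApproxClosed.apprSeq_apply_le_one hF n p.1
      · have h1 := (tendsto_pi_nhds.1 (HasOuterApproxClosed.tendsto_apprSeq hF)) p.1
        have h2 := ((NNReal.continuous_coe.tendsto _).comp h1).mul_const (D p)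
        convert h2 using 2
        · rfl
        by_cases hp : p.1 ∈ F
        · rw [Set.indicator_of_mem (show p ∈ Prod.fst ⁻¹' F from hp), Set.indicator_of_mem hp]
          simp
        · rw [Set.indicator_of_notMem (show p ∉ Prod.fst ⁻¹' F from hp),
            Set.indicator_of_notMem hp]
          simp
    refine ge_of_tendsto' ht fun n => ?_
    refine hb (fun x => (hF.apprSeq n x : ℝ))
      (NNReal.continuous_coe.comp (hF.apprSeq n).continuous) fun x => ⟨NNReal.coe_nonneg _, ?_⟩
    exact_mod_cast HasOuterApproxClosed.apprSeq_apply_le_one hF n x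
  set ρ : Measure (Euc d) := (lam.withDensity fun p => ‖D p‖ₑ).map Prod.fst with hρ
  have : IsFiniteMeasure (lam.withDensity fun p => ‖D p‖ₑ) :=
    isFiniteMeasure_withDensity hD.2.ne
  have : IsFiniteMeasure ρ := by rw [hρ]; infer_instance
  refine le_of_forall_pos_le_add fun ε hε => ?_
  obtain ⟨F, hFA, hF, hlt⟩ := hA.exists_isClosed_sdiff_lt (μ := ρ) (measure_ne_top _ _)
    (ε := ENNReal.ofReal ε) (by simpa using hε)
  have hmAF : MeasurableSet (Prod.fst ⁻¹' (A \ F) : Set (Euc d × Euc d)) :=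
    measurable_fst (hA.diff hF.measurableSet)
  have hsplit : (Prod.fst ⁻¹' A : Set (Euc d × Euc d)) =
      Prod.fst ⁻¹' F ∪ Prod.fst ⁻¹' (A \ F) := by
    rw [← Set.preimage_union, Set.union_diff_cancel hFA]
  rw [hsplit, setIntegral_union (Disjoint.preimage _ Set.disjoint_sdiff_right) hmAF
    hD.integrableOn hD.integrableOn]
  have h1 := hclosed F hF
  have h2 : ‖∫ p in Prod.fst ⁻¹' (A \ F), D p ∂lam‖ₑ < ENNReal.ofReal ε := by
    refine (enorm_integral_le_lintegral_enorm _).trans_lt ?_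
    rw [hρ, Measure.map_apply measurable_fst (hA.diff hF.measurableSet),
      withDensity_apply _ hmAF] at hlt
    exact hlt
  rw [← ofReal_norm_eq_enorm, ENNReal.ofReal_lt_ofReal_iff hε, Real.norm_eq_abs] at h2
  linarith [(abs_lt.1 h2).1]

lemma submart_of_cont {d : ℕ} (lam : Measure (Euc d × Euc d)) [IsProbabilityMeasure lam]
    (hX : Integrable (fun p : Euc d × Euc d => p.1) lam)
    (hY : Integrable (fun p : Euc d × Euc d => p.2) lam)
    (hb : ∀ i, ∀ b : Euc d → ℝ, Continuous b → (∀ x, 0 ≤ b x ∧ b x ≤ 1) →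
      0 ≤ ∫ p, b p.1 * (p.2 i - p.1 i) ∂lam) : IsSubmartingaleCoupling lam := by
  have hm : fstSigma d ≤ (inferInstance : MeasurableSpace (Euc d × Euc d)) :=
    measurable_fst.comap_le
  rw [IsSubmartingaleCoupling, ae_all_iff]
  intro i
  let P : Euc d →L[ℝ] ℝ := EuclideanSpace.proj i
  have hXi : Integrable (fun p : Euc d × Euc d => p.1 i) lam := P.integrable_comp hX
  have hYi : Integrable (fun p : Euc d × Euc d => p.2 i) lam := P.integrable_comp hY
  have hcomm : (fun p => (lam[(fun q : Euc d × Euc d => q.2) | fstSigma d]) p i)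
      =ᵐ[lam] lam[(fun q : Euc d × Euc d => q.2 i) | fstSigma d] :=
    P.comp_condExp_comm hY
  have hXm : StronglyMeasurable[fstSigma d] (fun p : Euc d × Euc d => p.1 i) := by
    have h1 : Measurable[fstSigma d] (Prod.fst : Euc d × Euc d → Euc d) :=
      comap_measurable _
    exact (P.continuous.measurable.comp h1).stronglyMeasurable
  set E := lam[(fun q : Euc d × Euc d => q.2 i) | fstSigma d] with hE
  have hEm : StronglyMeasurable[fstSigma d] E := stronglyMeasurable_condExp
  have hEi : Integrable E lam := integrable_condExp
  have hdm : StronglyMeasurable[fstSigma d] (fun p => E p - p.1 i) := hEm.sub hXm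
  have hdi : Integrable (fun p => E p - p.1 i) lam := hEi.sub hXi
  have hnn : 0 ≤ᵐ[lam.trim hm] fun p => E p - p.1 i := by
    refine ae_nonneg_of_forall_setIntegral_nonneg (hdi.trim hm hdm) fun s hs _ => ?_
    rw [← setIntegral_trim hm hdm hs, integral_sub hEi.integrableOn hXi.integrableOn, hE,
      setIntegral_condExp hm hYi hs, ← integral_sub hYi.integrableOn hXi.integrableOn]
    obtain ⟨A, hA, rfl⟩ := hs
    exact setIntegral_nonneg_of_cont lam _ (hYi.sub hXi) (hb i) A hA
  filter_upwards [hcomm, ae_of_ae_trim hm hnn] with p h1 h2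
  have h2' : 0 ≤ E p - p.1 i := h2
  rw [h1]
  linarith

/-- Strassen's theorem (increasing convex order): μ ≤icx ν iff there is a
submartingale coupling. -/
theorem strassen_submartingale_coupling
    (d : ℕ) (hd : 1 ≤ d) (μ ν : Measure (Euc d))
    [IsProbabilityMeasure μ] [IsProbabilityMeasure ν]
    (hμ : FiniteFirstMoment μ) (hν : FiniteFirstMoment ν) :
    IncConvexOrder μ ν ↔
      ∃ lam : Measure (Euc d × Euc d), IsProbabilityMeasure lam ∧
        IsCoupling lam μ ν ∧ IsSubmartingaleCoupling lam := by
  constructor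
  · intro h
    obtain ⟨L, hL⟩ := exists_functional hμ hν h
    obtain ⟨lam, hp, hc, hrep⟩ := exists_measure hμ hν L hL
    have hX : Integrable (fun p : Euc d × Euc d => p.1) lam := by
      have : Integrable (fun x : Euc d => x) (lam.map Prod.fst) := by rw [hc.1]; exact hμ
      exact this.comp_measurable measurable_fst
    have hY : Integrable (fun p : Euc d × Euc d => p.2) lam := by
      have : Integrable (fun x : Euc d => x) (lam.map Prod.snd) := by rw [hc.2]; exact hν
      exact this.comp_measurable measurable_snd
    refine ⟨lam, hp, hc, submart_of_cont lam hX hY fun i b bc hb => ?_⟩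
    have hk : (fun p : Euc d × Euc d => b p.1 * (p.2 i - p.1 i)) ∈ GrowSub d := by
      refine ⟨1, fun x y => ?_⟩
      have h1 : |x i| ≤ ‖x‖ := PiLp.norm_apply_le x i
      have h2 : |y i| ≤ ‖y‖ := PiLp.norm_apply_le y i
      rw [abs_mul, abs_of_nonneg (hb x).1]
      have h3 : |y i - x i| ≤ |y i| + |x i| := abs_sub _ _
      have h4 := mul_le_of_le_one_left (abs_nonneg (y i - x i)) (hb x).2
      linarith
    have := (hrep ⟨_, hk⟩ (show Continuous fun p : Euc d × Euc d =>
      b p.1 * (p.2 i - p.1 i) by fun_prop)).2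
    rw [this]
    have h0 := hL 0 0 ⟨_, hk⟩ (integrable_zero _ _ _) (integrable_zero _ _ _)
      (fun x j => if j = i then b x else 0) 1 (fun x j => by
        by_cases hj : j = i <;> simp [hj, hb x]) (fun x y => by simp)
    simpa using h0
  · rintro ⟨lam, hp, hc, hs⟩
    exact easy_dir hν lam hc hs
end
end

section
/- Let S be a measurable space and let P and Q be probability kernels from S to ℝ^d with finite first moments. Then P_θ ≤cx Q_θ holds for every θ ∈ S if and only if P and Q admit a pointwise coupling R such that R_θ is a martingale coupling for every θ ∈ S. -/
open MeasureTheory ProbabilityTheory Filter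

noncomputable section

/-- Subadditive functionals that are homogeneous over the natural numbers. -/
structure SubLin {L : Type*} [AddCommGroup L] (p : L → ℝ) : Prop where
  add : ∀ F G, p (F + G) ≤ p F + p G
  hom : ∀ (n : ℕ) F, p (n • F) = n * p F

/-- One step of the canonical linearization. -/
def linStep {L : Type*} [AddCommGroup L] (p : L → ℝ) (A : L) (F : L) : ℝ :=
  ⨅ k : ℕ, (p (F + k • A) - k * p A)

namespace SubLin

variable {L : Type*} [AddCommGroup L] {p : L → ℝ}

theorem zero (hp : SubLin p) : p 0 = 0 := by
  have := hp.hom 0 0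
  simpa using this

theorem neg_le (hp : SubLin p) (F : L) : -p (-F) ≤ p F := by
  have := hp.add F (-F)
  rw [add_neg_cancel, hp.zero] at this
  linarith

theorem step_lower (hp : SubLin p) (A F : L) (k : ℕ) :
    -p (-F) ≤ p (F + k • A) - k * p A := by
  have h := hp.add (F + k • A) (-F)
  have : F + k • A + -F = k • A := by abel
  rw [this, hp.hom] at h
  linarith

theorem step_bdd (hp : SubLin p) (A F : L) :
    BddBelow (Set.range fun k : ℕ => (p (F + k • A) - k * p A)) :=
  ⟨-p (-F), by rintro _ ⟨k, rfl⟩; exact hp.step_lower A F k⟩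

theorem step_le (hp : SubLin p) (A F : L) (k : ℕ) : linStep p A F ≤ p (F + k • A) - k * p A :=
  ciInf_le (hp.step_bdd A F) k

theorem step_le_self (hp : SubLin p) (A F : L) : linStep p A F ≤ p F := by
  simpa using hp.step_le A F 0

theorem step_anti (hp : SubLin p) (A F : L) {k l : ℕ} (h : k ≤ l) :
    p (F + l • A) - l * p A ≤ p (F + k • A) - k * p A := by
  obtain ⟨m, rfl⟩ := Nat.exists_eq_add_of_le h
  have h1 := hp.add (F + k • A) (m • A)
  rw [hp.hom, add_assoc, ← add_smul] at h1
  push_cast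
  linarith

theorem step (hp : SubLin p) (A : L) : SubLin (linStep p A) where
  add F G := by
    refine le_of_forall_pos_le_add fun ε hε => ?_
    obtain ⟨k, hk⟩ := exists_lt_of_ciInf_lt (lt_add_of_pos_right (linStep p A F) (half_pos hε))
    obtain ⟨l, hl⟩ := exists_lt_of_ciInf_lt (lt_add_of_pos_right (linStep p A G) (half_pos hε))
    have h1 := hp.step_le A (F + G) (k + l)
    have h2 := hp.add (F + k • A) (G + l • A)
    have : F + k • A + (G + l • A) = F + G + (k + l) • A := by rw [add_smul]; abel
    rw [this] at h2
    push_cast at h1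
    linarith
  hom n F := by
    rcases Nat.eq_zero_or_pos n with rfl | hn
    · simp only [zero_smul, Nat.cast_zero, zero_mul]
      unfold linStep
      simp [hp.hom]
    · have hn' : (0 : ℝ) < n := by exact_mod_cast hn
      apply le_antisymm
      · rw [← div_le_iff₀' hn']
        refine le_ciInf fun k => ?_
        rw [div_le_iff₀' hn']
        refine (hp.step_le A (n • F) (n * k)).trans (le_of_eq ?_)
        rw [mul_smul, ← smul_add, hp.hom]
        push_cast; ring
      · refine le_ciInf fun k => ?_
        refine le_trans ?_ (hp.step_anti A (n • F) (Nat.le_mul_of_pos_left k hn))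
        rw [mul_smul, ← smul_add, hp.hom]
        have := mul_le_mul_of_nonneg_left (hp.step_le A F k) hn'.le
        push_cast
        linarith

theorem step_linear (hp : SubLin p) (A : L) : linStep p A A + linStep p A (-A) ≤ 0 := by
  have h1 := hp.step_le_self A A
  have h2 := hp.step_le A (-A) 1
  simp [hp.zero] at h2
  linarith

end SubLin

/-- The iterated linearization. -/
def linSeq {L : Type*} [AddCommGroup L] (p : L → ℝ) (A : ℕ → L) : ℕ → L → ℝ
  | 0 => p
  | n + 1 => linStep (linSeq p A n) (A n)

/-- The limit of the iterated linearization. -/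
def linLim {L : Type*} [AddCommGroup L] (p : L → ℝ) (A : ℕ → L) (F : L) : ℝ :=
  ⨅ n, linSeq p A n F

namespace SubLin

variable {L : Type*} [AddCommGroup L] {p : L → ℝ}

theorem seq (hp : SubLin p) (A : ℕ → L) : ∀ n, SubLin (linSeq p A n)
  | 0 => hp
  | n + 1 => (hp.seq A n).step (A n)

theorem seq_anti (hp : SubLin p) (A : ℕ → L) (F : L) : Antitone fun n => linSeq p A n F :=
  antitone_nat_of_succ_le fun n => (hp.seq A n).step_le_self (A n) F

theorem lim_bdd (hp : SubLin p) (A : ℕ → L) (F : L) :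
    BddBelow (Set.range fun n => linSeq p A n F) := by
  refine ⟨-p (-F), ?_⟩
  rintro _ ⟨n, rfl⟩
  have h1 := (hp.seq A n).neg_le F
  have h2 : linSeq p A n (-F) ≤ linSeq p A 0 (-F) := hp.seq_anti A (-F) (Nat.zero_le n)
  change _ ≤ p (-F) at h2
  simp only
  linarith

theorem lim_le (hp : SubLin p) (A : ℕ → L) (F : L) (n : ℕ) : linLim p A F ≤ linSeq p A n F :=
  ciInf_le (hp.lim_bdd A F) n

theorem lim_le_self (hp : SubLin p) (A : ℕ → L) (F : L) : linLim p A F ≤ p F :=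
  hp.lim_le A F 0

theorem lim (hp : SubLin p) (A : ℕ → L) : SubLin (linLim p A) where
  add F G := by
    refine le_of_forall_pos_le_add fun ε hε => ?_
    obtain ⟨k, hk⟩ := exists_lt_of_ciInf_lt (lt_add_of_pos_right (linLim p A F) (half_pos hε))
    obtain ⟨l, hl⟩ := exists_lt_of_ciInf_lt (lt_add_of_pos_right (linLim p A G) (half_pos hε))
    have h1 := hp.lim_le A (F + G) (max k l)
    have h2 := (hp.seq A (max k l)).add F G
    have h3 := hp.seq_anti A F (le_max_left k l)
    have h4 := hp.seq_anti A G (le_max_right k l)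
    simp only at h3 h4
    linarith
  hom n F := by
    unfold linLim
    simp only [(hp.seq A _).hom]
    rw [Real.mul_iInf_of_nonneg (Nat.cast_nonneg n)]

theorem lim_linear (hp : SubLin p) (A : ℕ → L) (n : ℕ) :
    linLim p A (A n) + linLim p A (-A n) ≤ 0 := by
  have h1 := hp.lim_le A (A n) (n + 1)
  have h2 := hp.lim_le A (-A n) (n + 1)
  have h3 := (hp.seq A n).step_linear (A n)
  change _ ≤ linStep _ _ _ at h1
  change _ ≤ linStep _ _ _ at h2
  linarith

end SubLin

theorem measurable_linLim {L S : Type*} [AddCommGroup L] [MeasurableSpace S] (p : S → L → ℝ)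
    (hp : ∀ F, Measurable fun θ => p θ F) (A : ℕ → L) (F : L) :
    Measurable fun θ => linLim (p θ) A F := by
  have : ∀ n, ∀ F, Measurable fun θ => linSeq (p θ) A n F := by
    intro n
    induction n with
    | zero => exact hp
    | succ n ih =>
      intro F
      refine Measurable.iInf fun k => ?_
      exact (ih _).sub ((ih _).const_mul _)
  exact Measurable.iInf fun n => this n F

/-- A continuous cutoff function. -/
def cut {V : Type*} [NormedAddCommGroup V] (m : ℕ) (x : V) : ℝ := max 0 (min 1 ((m : ℝ) + 1 - ‖x‖))

section Cut

variable {V : Type*} [NormedAddCommGroup V]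

theorem cut_nonneg (m : ℕ) (x : V) : 0 ≤ cut m x := le_max_left _ _

theorem cut_le_one (m : ℕ) (x : V) : cut m x ≤ 1 := max_le zero_le_one (min_le_left _ _)

theorem continuous_cut (m : ℕ) : Continuous (cut m : V → ℝ) := by
  unfold cut; fun_prop

theorem cut_eq_one {m : ℕ} {x : V} (h : ‖x‖ ≤ m) : cut m x = 1 := by
  unfold cut
  rw [min_eq_left (by linarith)]; simp

theorem cut_eq_zero {m : ℕ} {x : V} (h : (m : ℝ) + 1 ≤ ‖x‖) : cut m x = 0 := by
  unfold cut
  exact max_eq_left ((min_le_right _ _).trans (by linarith))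

theorem cut_congr {W : Type*} [NormedAddCommGroup W] (m : ℕ) {x : V} {y : W} (h : ‖x‖ = ‖y‖) :
    cut m x = cut m y := by
  unfold cut; rw [h]

theorem hasCompactSupport_cut [ProperSpace V] (m : ℕ) : HasCompactSupport (cut m : V → ℝ) := by
  refine HasCompactSupport.intro (isCompact_closedBall (0 : V) ((m : ℝ) + 1)) fun x hx => ?_
  apply cut_eq_zero
  rw [mem_closedBall_zero_iff] at hx
  linarith

theorem eventually_cut (x : V) : ∀ᶠ n : ℕ in atTop, cut n x = 1 := by
  obtain ⟨N, hN⟩ := exists_nat_ge ‖x‖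
  filter_upwards [eventually_ge_atTop N] with n hn
  exact cut_eq_one (hN.trans (by exact_mod_cast hn))

theorem tendsto_cut (x : V) : Tendsto (fun n => cut n x) atTop (nhds 1) :=
  tendsto_const_nhds.congr' ((eventually_cut x).mono fun _ h => h.symm)

/-- Weighted tails. -/
def tl (m : ℕ) (x : V) : ℝ := (1 + ‖x‖) * (1 - cut m x)

theorem tl_nonneg (m : ℕ) (x : V) : 0 ≤ tl m x :=
  mul_nonneg (by positivity) (by linarith [cut_le_one m x])

theorem tl_le (m : ℕ) (x : V) : tl m x ≤ 1 + ‖x‖ := by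
  have := norm_nonneg x
  have := cut_nonneg m x
  unfold tl
  nlinarith

theorem continuous_tl (m : ℕ) : Continuous (tl m : V → ℝ) := by
  have := continuous_cut (V := V) m
  unfold tl; fun_prop

theorem exists_cut_of_compactSupport {f : V → ℝ} (hf : HasCompactSupport f) :
    ∃ m : ℕ, ∀ x, cut m x * f x = f x := by
  obtain ⟨r, hr⟩ := hf.isCompact.isBounded.subset_closedBall 0
  obtain ⟨N, hN⟩ := exists_nat_ge r
  refine ⟨N, fun x => ?_⟩
  by_cases hx : x ∈ tsupport f
  · have := hr hx
    rw [mem_closedBall_zero_iff] at this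
    rw [cut_eq_one (this.trans hN), one_mul]
  · rw [image_eq_zero_of_notMem_tsupport hx, mul_zero]

/-- A dense sequence of continuous functions. -/
def dseq (V : Type*) [NormedAddCommGroup V] [SecondCountableTopology V] [ProperSpace V] :
    ℕ → C(V, ℝ) := TopologicalSpace.denseSeq C(V, ℝ)

theorem exists_dseq [SecondCountableTopology V] [ProperSpace V] (F : C(V, ℝ)) (m : ℕ)
    {ε : ℝ} (hε : 0 < ε) : ∃ k, ∀ x, |cut m x * F x - cut m x * dseq V k x| ≤ ε := by
  have h1 : F ∈ closure (Set.range (dseq V)) := TopologicalSpace.denseRange_denseSeq C(V, ℝ) F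
  obtain ⟨u, hu, hlim⟩ := mem_closure_iff_seq_limit.1 h1
  rw [ContinuousMap.tendsto_iff_forall_isCompact_tendstoUniformlyOn] at hlim
  have h2 := hlim _ (isCompact_closedBall (0 : V) ((m : ℝ) + 1))
  rw [Metric.tendstoUniformlyOn_iff] at h2
  obtain ⟨n, hn⟩ := (h2 ε hε).exists
  obtain ⟨k, hk⟩ := hu n
  refine ⟨k, fun x => ?_⟩
  rw [hk, ← mul_sub, abs_mul, abs_of_nonneg (cut_nonneg m x)]
  by_cases hx : ‖x‖ ≤ m + 1
  · have := hn x (by simpa using hx)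
    rw [Real.dist_eq] at this
    have h3 := cut_le_one m x
    have h4 := cut_nonneg m x
    have := abs_nonneg (F x - u n x)
    nlinarith
  · rw [cut_eq_zero (by linarith)]; simpa using hε.le

end Cut

/-- Linear growth. -/
def LinGrow {d : ℕ} (f : Euc d → ℝ) : Prop := ∃ C, ∀ x, |f x| ≤ C * (1 + ‖x‖)

theorem LinGrow.integrable {d : ℕ} {f : Euc d → ℝ} (hf : LinGrow f) (hc : Continuous f)
    {μ : Measure (Euc d)} [IsProbabilityMeasure μ] (hμ : FiniteFirstMoment μ) :
    Integrable f μ := by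
  obtain ⟨C, hC⟩ := hf
  have h1 : Integrable (fun x : Euc d => C * (1 + ‖x‖)) μ :=
    ((integrable_const 1).add (Integrable.norm hμ)).const_mul C
  exact h1.mono' hc.aestronglyMeasurable (ae_of_all _ hC)

/-- Triples of test functions. -/
abbrev Tri (d : ℕ) : Type := (Euc d → ℝ) × (Euc d → ℝ) × (Euc d → Euc d)

/-- Admissible triples. -/
def goodTri (d : ℕ) : Submodule ℚ (Tri d) where
  carrier := {c | (Continuous c.1 ∧ LinGrow c.1) ∧ (Continuous c.2.1 ∧ LinGrow c.2.1)}
  add_mem' := by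
    have key : ∀ f g : Euc d → ℝ, LinGrow f → LinGrow g → LinGrow (f + g) := by
      rintro f g ⟨C, hC⟩ ⟨D, hD⟩
      refine ⟨C + D, fun x => (abs_add_le _ _).trans ?_⟩
      have := hC x
      have := hD x
      linarith
    rintro a b ⟨⟨h1, h2⟩, h3, h4⟩ ⟨⟨h5, h6⟩, h7, h8⟩
    exact ⟨⟨h1.add h5, key _ _ h2 h6⟩, h3.add h7, key _ _ h4 h8⟩
  zero_mem' := ⟨⟨continuous_zero, 0, by simp⟩, continuous_zero, 0, by simp⟩
  smul_mem' := by
    have key : ∀ (r : ℚ) (f : Euc d → ℝ), LinGrow f → LinGrow (r • f) := by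
      rintro r f ⟨C, hC⟩
      refine ⟨|(r : ℝ)| * C, fun x => ?_⟩
      rw [Pi.smul_apply, Rat.smul_def, abs_mul, mul_assoc]
      exact mul_le_mul_of_nonneg_left (hC x) (abs_nonneg _)
    rintro r a ⟨⟨h1, h2⟩, h3, h4⟩
    exact ⟨⟨h1.const_smul r, key _ _ h2⟩, h3.const_smul r, key _ _ h4⟩

/-- The test function attached to a triple. -/
def triT {d : ℕ} (c : Tri d) (z : Euc d × Euc d) : ℝ :=
  c.1 z.1 + c.2.1 z.2 + inner ℝ (c.2.2 z.1) (z.2 - z.1)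

/-- The cost of a triple. -/
def triJ {d : ℕ} (μ ν : Measure (Euc d)) (c : Tri d) : ℝ := ∫ x, c.1 x ∂μ + ∫ x, c.2.1 x ∂ν

theorem triT_add {d : ℕ} (a b : Tri d) (z) : triT (a + b) z = triT a z + triT b z := by
  simp only [triT, Prod.fst_add, Prod.snd_add, Pi.add_apply, inner_add_left]; ring

theorem triT_smul {d : ℕ} (r : ℚ) (a : Tri d) (z) : triT (r • a) z = r * triT a z := by
  simp only [triT, Prod.smul_fst, Prod.smul_snd, Pi.smul_apply]
  rw [← Rat.cast_smul_eq_qsmul ℝ r (a.2.2 z.1), inner_smul_left]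
  simp [Rat.smul_def]; ring

theorem triT_zero {d : ℕ} (z) : triT (0 : Tri d) z = 0 := by simp [triT]

section J

variable {d : ℕ} {μ ν : Measure (Euc d)} [IsProbabilityMeasure μ] [IsProbabilityMeasure ν]

theorem triJ_add (hμ : FiniteFirstMoment μ) (hν : FiniteFirstMoment ν)
    {a b : Tri d} (ha : a ∈ goodTri d) (hb : b ∈ goodTri d) :
    triJ μ ν (a + b) = triJ μ ν a + triJ μ ν b := by
  simp only [triJ, Prod.fst_add, Prod.snd_add, Pi.add_apply]
  rw [integral_add (ha.1.2.integrable ha.1.1 hμ) (hb.1.2.integrable hb.1.1 hμ),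
    integral_add (ha.2.2.integrable ha.2.1 hν) (hb.2.2.integrable hb.2.1 hν)]
  ring

theorem triJ_smul (r : ℚ) (a : Tri d) : triJ μ ν (r • a) = r * triJ μ ν a := by
  simp only [triJ, Prod.smul_fst, Prod.smul_snd, Pi.smul_apply, Rat.smul_def]
  rw [integral_const_mul, integral_const_mul]; ring

theorem triJ_nonneg (hμ : FiniteFirstMoment μ) (hν : FiniteFirstMoment ν) (hcx : ConvexOrder μ ν)
    {c : Tri d} (hc : c ∈ goodTri d) (h : ∀ z, 0 ≤ triT c z) : 0 ≤ triJ μ ν c := by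
  obtain ⟨f, g, k⟩ := c
  obtain ⟨⟨hf1, hf2⟩, hg1, hg2⟩ := hc
  simp only [triT] at *
  let a : Euc d → Euc d → ℝ := fun x y => -f x - inner ℝ (k x) (y - x)
  have ha : ∀ x y, a x y ≤ g y := fun x y => by
    have := h (x, y)
    simp only [a] at *
    linarith
  let φ : Euc d → ℝ := fun y => ⨆ x, a x y
  have hbdd : ∀ y, BddAbove (Set.range fun x => a x y) := fun y =>
    ⟨g y, by rintro _ ⟨x, rfl⟩; exact ha x y⟩
  have hle : ∀ x y, a x y ≤ φ y := fun x y => le_ciSup (hbdd y) x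
  have hφg : ∀ y, φ y ≤ g y := fun y => ciSup_le fun x => ha x y
  have hφf : ∀ x, -f x ≤ φ x := fun x => by
    have := hle x x
    simpa [a] using this
  have hconv : ConvexOn ℝ Set.univ φ := by
    refine ⟨convex_univ, fun x _ y _ s t hs ht hst => ?_⟩
    refine ciSup_le fun u => ?_
    have h1 := mul_le_mul_of_nonneg_left (hle u x) hs
    have h2 := mul_le_mul_of_nonneg_left (hle u y) ht
    have h3 : a u (s • x + t • y) = s * a u x + t * a u y := by
      have : s • x + t • y - u = s • (x - u) + t • (y - u) := by
        rw [smul_sub, smul_sub]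
        have : u = s • u + t • u := by rw [← add_smul, hst, one_smul]
        nth_rewrite 1 [this]
        abel
      simp only [a]
      rw [this, inner_add_right, inner_smul_right, inner_smul_right]
      linear_combination (f u) * hst
    rw [h3]
    simp only [smul_eq_mul]
    linarith
  have hcont : Continuous φ := by
    rw [← continuousOn_univ]
    exact hconv.continuousOn isOpen_univ
  have hgrow : LinGrow φ := by
    obtain ⟨C, hC⟩ := hf2
    obtain ⟨D, hD⟩ := hg2
    refine ⟨C + D, fun x => ?_⟩
    have h1 := hC x
    have h2 := hD x
    have h3 := hφf x
    have h4 := hφg x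
    have h5 := neg_abs_le (f x)
    have h6 := le_abs_self (f x)
    have h7 := le_abs_self (g x)
    have h8 := abs_nonneg (f x)
    have h9 := abs_nonneg (g x)
    rw [abs_le]
    constructor <;> nlinarith
  have i1 := hgrow.integrable hcont hμ
  have i2 := hgrow.integrable hcont hν
  have e1 := hcx φ hconv i1 i2
  have e2 := integral_mono (hf2.integrable hf1 hμ).neg i1 hφf
  have e3 := integral_mono i2 (hg2.integrable hg1 hν) hφg
  simp only [Pi.neg_apply, integral_neg] at e2
  simp only [triJ]
  linarith

end J

/-- The weight function. -/
def wt {d : ℕ} (z : Euc d × Euc d) : ℝ := 1 + ‖z.1‖ + ‖z.2‖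

theorem one_le_wt {d : ℕ} (z : Euc d × Euc d) : 1 ≤ wt z := by
  unfold wt
  have := norm_nonneg z.1
  have := norm_nonneg z.2
  linarith

theorem continuous_wt {d : ℕ} : Continuous (wt : Euc d × Euc d → ℝ) := by
  unfold wt; fun_prop

/-- Functions of linear growth on the product. -/
def GrowSp (d : ℕ) : Submodule ℝ (Euc d × Euc d → ℝ) where
  carrier := {F | ∃ C : ℝ, ∀ z, |F z| ≤ C * wt z}
  add_mem' := by
    rintro f g ⟨C, hC⟩ ⟨D, hD⟩
    refine ⟨C + D, fun x => (abs_add_le _ _).trans ?_⟩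
    have := hC x
    have := hD x
    linarith
  zero_mem' := ⟨0, by simp⟩
  smul_mem' := by
    rintro r f ⟨C, hC⟩
    refine ⟨|r| * C, fun x => ?_⟩
    rw [Pi.smul_apply, smul_eq_mul, abs_mul, mul_assoc]
    exact mul_le_mul_of_nonneg_left (hC x) (abs_nonneg _)

/-- The countable family of scalar test functions. -/
def fam (d : ℕ) : Set (Euc d → ℝ) :=
  {fun _ => 1} ∪ {fun x => ‖x‖} ∪ Set.range (fun m : ℕ => tl m) ∪
    Set.range (fun mk : ℕ × ℕ => fun x => cut mk.1 x * dseq (Euc d) mk.2 x)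

theorem fam_countable (d : ℕ) : (fam d).Countable :=
  (((Set.countable_singleton _).union (Set.countable_singleton _)).union
    (Set.countable_range _)).union (Set.countable_range _)

theorem fam_good {d : ℕ} {f : Euc d → ℝ} (hf : f ∈ fam d) : Continuous f ∧ LinGrow f := by
  rcases hf with ((hf | hf) | ⟨m, rfl⟩) | ⟨⟨m, k⟩, rfl⟩
  · rw [Set.mem_singleton_iff] at hf
    subst hf
    exact ⟨continuous_const, 1, fun x => by simp⟩
  · rw [Set.mem_singleton_iff] at hf
    subst hf
    exact ⟨continuous_norm, 1, fun x => by simp⟩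
  · refine ⟨continuous_tl m, 1, fun x => ?_⟩
    rw [abs_of_nonneg (tl_nonneg m x), one_mul]
    exact tl_le m x
  · have h1 : Continuous fun x => cut m x * dseq (Euc d) k x :=
      (continuous_cut m).mul (map_continuous _)
    refine ⟨h1, ?_⟩
    have h2 : HasCompactSupport fun x => cut m x * dseq (Euc d) k x :=
      (hasCompactSupport_cut m).mul_right
    obtain ⟨C, hC⟩ := h2.exists_bound_of_continuous h1
    refine ⟨C, fun x => (hC x).trans ?_⟩
    have h3 := (norm_nonneg _).trans (hC x)
    have := norm_nonneg x
    nlinarith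

/-- Generators. -/
def gens (d : ℕ) : Set (Tri d) :=
  (fun f => (f, 0, 0)) '' fam d ∪ (fun f => (0, f, 0)) '' fam d ∪
    ⋃ i : Fin d, (fun f => (0, 0, fun x => f x • EuclideanSpace.single i (1 : ℝ))) '' fam d

theorem gens_countable (d : ℕ) : (gens d).Countable :=
  (((fam_countable d).image _).union ((fam_countable d).image _)).union
    (Set.countable_iUnion fun _ => (fam_countable d).image _)

/-- The countable family of dual elements. -/
def dual (d : ℕ) : Submodule ℚ (Tri d) := Submodule.span ℚ (gens d)

instance (d : ℕ) : Countable (dual d) := by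
  have := (gens_countable d).to_subtype
  have h : Countable (Submodule.span ℚ (Set.range (Subtype.val : gens d → Tri d))) := inferInstance
  rw [Subtype.range_val] at h
  exact h

theorem dual_le_good (d : ℕ) : dual d ≤ goodTri d := by
  refine Submodule.span_le.2 ?_
  have z : Continuous (0 : Euc d → ℝ) ∧ LinGrow (0 : Euc d → ℝ) := ⟨continuous_zero, 0, by simp⟩
  rintro _ ((⟨f, hf, rfl⟩ | ⟨f, hf, rfl⟩) | h)
  · exact ⟨fam_good hf, z⟩
  · exact ⟨z, fam_good hf⟩
  · obtain ⟨i, f, hf, rfl⟩ := Set.mem_iUnion.1 h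
    exact ⟨z, z⟩

theorem dual_left {d : ℕ} {f : Euc d → ℝ} (hf : f ∈ fam d) : ((f, 0, 0) : Tri d) ∈ dual d :=
  Submodule.subset_span (Or.inl (Or.inl ⟨f, hf, rfl⟩))

theorem dual_right {d : ℕ} {f : Euc d → ℝ} (hf : f ∈ fam d) : ((0, f, 0) : Tri d) ∈ dual d :=
  Submodule.subset_span (Or.inl (Or.inr ⟨f, hf, rfl⟩))

theorem dual_mart {d : ℕ} {f : Euc d → ℝ} (hf : f ∈ fam d) (i : Fin d) :
    ((0, 0, fun x => f x • EuclideanSpace.single i (1 : ℝ)) : Tri d) ∈ dual d :=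
  Submodule.subset_span (Or.inr (Set.mem_iUnion.2 ⟨i, f, hf, rfl⟩))

theorem triT_left {d : ℕ} (f : Euc d → ℝ) (z) : triT ((f, 0, 0) : Tri d) z = f z.1 := by
  simp [triT]

theorem triT_right {d : ℕ} (f : Euc d → ℝ) (z) : triT ((0, f, 0) : Tri d) z = f z.2 := by
  simp [triT]

theorem triT_mart {d : ℕ} (f : Euc d → ℝ) (i : Fin d) (z) :
    triT ((0, 0, fun x => f x • EuclideanSpace.single i (1 : ℝ)) : Tri d) z =
      f z.1 * (z.2 i - z.1 i) := by
  simp [triT, inner_smul_left, EuclideanSpace.inner_single_left]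

/-- The weight as a dual element. -/
def wTri (d : ℕ) : Tri d := (fun _ => 1, 0, 0) + (fun x => ‖x‖, 0, 0) + (0, fun x => ‖x‖, 0)

theorem one_mem_fam (d : ℕ) : (fun _ => 1) ∈ fam d := Or.inl (Or.inl (Or.inl rfl))
theorem norm_mem_fam (d : ℕ) : (fun x => ‖x‖) ∈ fam d := Or.inl (Or.inl (Or.inr rfl))
theorem tl_mem_fam (d m : ℕ) : tl m ∈ fam d := Or.inl (Or.inr ⟨m, rfl⟩)
theorem cut_mem_fam (d m k : ℕ) : (fun x => cut m x * dseq (Euc d) k x) ∈ fam d :=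
  Or.inr ⟨(m, k), rfl⟩

theorem wTri_mem (d : ℕ) : wTri d ∈ dual d :=
  (dual d).add_mem ((dual d).add_mem (dual_left (one_mem_fam d)) (dual_left (norm_mem_fam d)))
    (dual_right (norm_mem_fam d))

theorem triT_wTri {d : ℕ} (z) : triT (wTri d) z = wt z := by
  rw [wTri, triT_add, triT_add, triT_left, triT_left, triT_right]; rfl

/-- The index set of the dual problem. -/
abbrev Feas {d : ℕ} (F : Euc d × Euc d → ℝ) : Type :=
  {c : dual d // ∀ z, F z ≤ triT (c : Tri d) z}

/-- The dual value. -/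
def hb {d : ℕ} (μ ν : Measure (Euc d)) (F : GrowSp d) : ℝ :=
  ⨅ c : Feas F.1, triJ μ ν c.1

theorem feas_of_grow {d : ℕ} (F : GrowSp d) : ∃ n : ℕ, ∀ z, F.1 z ≤ triT ((n : ℚ) • wTri d) z := by
  obtain ⟨F, C, hC⟩ := F
  obtain ⟨n, hn⟩ := exists_nat_ge C
  refine ⟨n, fun z => ?_⟩
  rw [triT_smul, triT_wTri]
  have h1 := hC z
  have h2 := one_le_wt z
  have h3 := le_abs_self (F z)
  have h4 : C * wt z ≤ n * wt z := mul_le_mul_of_nonneg_right hn (by linarith)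
  push_cast
  linarith

instance {d : ℕ} (F : GrowSp d) : Nonempty (Feas F.1) := by
  obtain ⟨n, hn⟩ := feas_of_grow F
  exact ⟨⟨⟨_, (dual d).smul_mem _ (wTri_mem d)⟩, hn⟩⟩

section hb

variable {d : ℕ} {μ ν : Measure (Euc d)} [IsProbabilityMeasure μ] [IsProbabilityMeasure ν]

theorem hb_bdd (hμ : FiniteFirstMoment μ) (hν : FiniteFirstMoment ν) (hcx : ConvexOrder μ ν)
    (F : GrowSp d) : BddBelow (Set.range fun c : Feas F.1 => triJ μ ν c.1) := by
  obtain ⟨n, hn⟩ := feas_of_grow (-F)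
  refine ⟨-triJ μ ν ((n : ℚ) • wTri d), ?_⟩
  rintro _ ⟨⟨⟨c, hc⟩, hF⟩, rfl⟩
  have m1 := dual_le_good d ((dual d).smul_mem (n : ℚ) (wTri_mem d))
  have m2 := dual_le_good d hc
  have h := triJ_nonneg hμ hν hcx ((goodTri d).add_mem m2 m1) fun z => by
    rw [triT_add]
    have h1 := hn z
    have h2 := hF z
    have h3 : (-F).1 z = -(F.1 z) := rfl
    simp only at h2
    linarith
  rw [triJ_add hμ hν m2 m1] at h
  simp only
  linarith

theorem hb_le (hμ : FiniteFirstMoment μ) (hν : FiniteFirstMoment ν) (hcx : ConvexOrder μ ν)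
    (F : GrowSp d) {c : Tri d} (hc : c ∈ dual d) (h : ∀ z, F.1 z ≤ triT c z) :
    hb μ ν F ≤ triJ μ ν c :=
  ciInf_le (hb_bdd hμ hν hcx F) ⟨⟨c, hc⟩, h⟩

theorem hb_subLin (hμ : FiniteFirstMoment μ) (hν : FiniteFirstMoment ν) (hcx : ConvexOrder μ ν) :
    SubLin (hb μ ν) where
  add F G := by
    refine le_of_forall_pos_le_add fun ε hε => ?_
    obtain ⟨⟨⟨a, ha⟩, hFa⟩, hk⟩ :=
      exists_lt_of_ciInf_lt (lt_add_of_pos_right (hb μ ν F) (half_pos hε))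
    obtain ⟨⟨⟨b, hb'⟩, hGb⟩, hl⟩ :=
      exists_lt_of_ciInf_lt (lt_add_of_pos_right (hb μ ν G) (half_pos hε))
    have h1 := hb_le hμ hν hcx (F + G) ((dual d).add_mem ha hb') fun z => by
      rw [triT_add]
      exact add_le_add (hFa z) (hGb z)
    rw [triJ_add hμ hν (dual_le_good d ha) (dual_le_good d hb')] at h1
    simp only at hk hl
    linarith
  hom n F := by
    rcases Nat.eq_zero_or_pos n with rfl | hn
    · simp only [zero_smul, Nat.cast_zero, zero_mul]
      apply le_antisymm
      · have := hb_le hμ hν hcx (0 : GrowSp d) (dual d).zero_mem fun z => by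
          rw [triT_zero]; exact le_rfl
        simpa [triJ] using this
      · refine le_ciInf fun c => ?_
        refine triJ_nonneg hμ hν hcx (dual_le_good d c.1.2) fun z => ?_
        exact c.2 z
    · have hn' : (0 : ℝ) < n := by exact_mod_cast hn
      have hsm : ∀ z, (n • F).1 z = n * F.1 z := fun z => by
        change (n • F.1) z = _
        simp
      apply le_antisymm
      · rw [← div_le_iff₀' hn']
        refine le_ciInf fun c => ?_
        rw [div_le_iff₀' hn']
        have := hb_le hμ hν hcx (n • F) ((dual d).smul_mem (n : ℚ) c.1.2) fun z => by
          rw [hsm, triT_smul]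
          push_cast
          exact mul_le_mul_of_nonneg_left (c.2 z) hn'.le
        rw [triJ_smul] at this
        exact_mod_cast this
      · refine le_ciInf fun c => ?_
        have := hb_le hμ hν hcx F ((dual d).smul_mem (n : ℚ)⁻¹ c.1.2) fun z => by
          rw [triT_smul]
          push_cast
          have := c.2 z
          rw [hsm] at this
          rwa [inv_mul_eq_div, le_div_iff₀' hn']
        rw [triJ_smul] at this
        push_cast at this
        rwa [inv_mul_eq_div, le_div_iff₀' hn'] at this

end hb

theorem measurable_hb {d : ℕ} {S : Type*} [MeasurableSpace S] (P Q : Kernel S (Euc d))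
    [IsMarkovKernel P] [IsMarkovKernel Q] (F : GrowSp d) :
    Measurable fun θ => hb (P θ) (Q θ) F := by
  refine Measurable.iInf fun c => ?_
  have h := dual_le_good d c.1.2
  exact (h.1.1.stronglyMeasurable.integral_kernel.measurable).add
    (h.2.1.stronglyMeasurable.integral_kernel.measurable)

theorem grow_of_compactSupport {d : ℕ} {F : Euc d × Euc d → ℝ} (hc : Continuous F)
    (hs : HasCompactSupport F) : F ∈ GrowSp d := by
  obtain ⟨C, hC⟩ := hs.exists_bound_of_continuous hc
  refine ⟨C, fun z => (hC z).trans ?_⟩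
  have h3 := (norm_nonneg _).trans (hC z)
  exact le_mul_of_one_le_right h3 (one_le_wt z)

/-- The countable family along which we linearize. -/
def linFam (d : ℕ) (n : ℕ) : GrowSp d :=
  ⟨fun z => cut n.unpair.1 z * dseq (Euc d × Euc d) n.unpair.2 z,
    grow_of_compactSupport ((continuous_cut _).mul (map_continuous _))
      (hasCompactSupport_cut _).mul_right⟩

/-- The properties of the linearized functional which are used. -/
structure QF {d : ℕ} (μ ν : Measure (Euc d)) (q : GrowSp d → ℝ) : Prop where
  sub : SubLin q
  le : ∀ (F : GrowSp d) (c : Tri d), c ∈ dual d → (∀ z, F.1 z ≤ triT c z) → q F ≤ triJ μ ν c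
  lin : ∀ n, q (linFam d n) + q (-linFam d n) ≤ 0

theorem tendsto_tl {d : ℕ} {μ : Measure (Euc d)} [IsProbabilityMeasure μ]
    (hμ : FiniteFirstMoment μ) : Tendsto (fun n : ℕ => ∫ x, tl n x ∂μ) atTop (nhds 0) := by
  have h1 : Integrable (fun x : Euc d => 1 + ‖x‖) μ := (integrable_const 1).add (Integrable.norm hμ)
  have h := tendsto_integral_of_dominated_convergence (μ := μ) (F := fun n : ℕ => tl n)
    (f := fun _ => (0 : ℝ)) (fun x : Euc d => 1 + ‖x‖)
    (fun n => (continuous_tl n).aestronglyMeasurable) h1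
    (fun n => ae_of_all _ fun x => by
      rw [Real.norm_eq_abs, abs_of_nonneg (tl_nonneg n x)]; exact tl_le n x)
    (ae_of_all _ fun x => by
      refine tendsto_const_nhds.congr' ((eventually_cut x).mono fun n h => ?_)
      simp [tl, h])
  simpa using h

namespace QF

variable {d : ℕ} {μ ν : Measure (Euc d)} [IsProbabilityMeasure μ] [IsProbabilityMeasure ν]
  {q : GrowSp d → ℝ}

theorem le_of_approx (hμ : FiniteFirstMoment μ) (hν : FiniteFirstMoment ν) (hq : QF μ ν q)
    (F : GrowSp d) (a : ℝ)
    (h : ∀ ε : ℚ, 0 < ε → ∃ c ∈ dual d, (∀ z, F.1 z ≤ triT c z + ε * wt z) ∧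
      triJ μ ν c ≤ a + ε) : q F ≤ a := by
  set K := triJ μ ν (wTri d) with hK
  refine le_of_forall_pos_le_add fun η hη => ?_
  have hpos : (0 : ℝ) < 1 + |K| := by positivity
  obtain ⟨ε, hε0, hε1⟩ := exists_rat_btwn (div_pos hη hpos)
  have hε : 0 < ε := by exact_mod_cast hε0
  obtain ⟨c, hc, h1, h2⟩ := h ε hε
  have m := (dual d).smul_mem ε (wTri_mem d)
  have h3 := hq.le F (c + ε • wTri d) ((dual d).add_mem hc m) fun z => by
    rw [triT_add, triT_smul, triT_wTri]; exact h1 z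
  rw [triJ_add hμ hν (dual_le_good d hc) (dual_le_good d m), triJ_smul] at h3
  rw [lt_div_iff₀ hpos] at hε1
  have h4 := le_abs_self K
  have h5 : (ε : ℝ) * K ≤ ε * |K| := mul_le_mul_of_nonneg_left h4 hε0.le
  rw [← hK] at h3
  linarith

theorem le_wt (hμ : FiniteFirstMoment μ) (hν : FiniteFirstMoment ν) (hq : QF μ ν q)
    (F : GrowSp d) {r : ℝ} (h : ∀ z, F.1 z ≤ r * wt z) : q F ≤ r * triJ μ ν (wTri d) := by
  set K := triJ μ ν (wTri d) with hK
  refine hq.le_of_approx hμ hν F _ fun ε hε => ?_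
  have hε' : (0 : ℝ) < ε := by exact_mod_cast hε
  have hpos : (0 : ℝ) < 1 + |K| := by positivity
  have : r < r + ε / (1 + |K|) := by linarith [div_pos hε' hpos]
  obtain ⟨s, hs1, hs2⟩ := exists_rat_btwn this
  refine ⟨s • wTri d, (dual d).smul_mem s (wTri_mem d), fun z => ?_, ?_⟩
  · rw [triT_smul, triT_wTri]
    have h1 := one_le_wt z
    have h2 := h z
    have h3 : r * wt z ≤ s * wt z := mul_le_mul_of_nonneg_right hs1.le (by linarith)
    have : (0 : ℝ) ≤ ε * wt z := mul_nonneg hε'.le (by linarith)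
    linarith
  · rw [triJ_smul, ← hK]
    have h1 : (s - r) * (1 + |K|) < ε := by
      rw [← lt_div_iff₀ hpos]; linarith
    have h2 : (s - r) * K ≤ (s - r) * |K| :=
      mul_le_mul_of_nonneg_left (le_abs_self K) (by linarith)
    linarith

theorem nonpos (hμ : FiniteFirstMoment μ) (hν : FiniteFirstMoment ν) (hq : QF μ ν q)
    (F : GrowSp d) (h : ∀ z, F.1 z ≤ 0) : q F ≤ 0 := by
  simpa using hq.le_wt hμ hν F (r := 0) (by simpa using h)

theorem cc_lin (hμ : FiniteFirstMoment μ) (hν : FiniteFirstMoment ν) (hq : QF μ ν q)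
    (F : GrowSp d) (hc : Continuous F.1) (hs : HasCompactSupport F.1) : q F + q (-F) = 0 := by
  refine le_antisymm ?_ (by linarith [hq.sub.neg_le F])
  refine le_of_forall_pos_le_add fun η hη => ?_
  set K := triJ μ ν (wTri d) with hK
  have hpos : (0 : ℝ) < 1 + |K| := by positivity
  obtain ⟨m, hm⟩ := exists_cut_of_compactSupport hs
  have hε : 0 < η / (1 + |K|) / 2 := half_pos (div_pos hη hpos)
  obtain ⟨k, hk⟩ := exists_dseq ⟨F.1, hc⟩ m hε
  set ε := η / (1 + |K|) / 2 with hεd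
  let G := linFam d (Nat.pair m k)
  have hG : ∀ z, |F.1 z - G.1 z| ≤ ε * wt z := fun z => by
    have h1 := hk z
    simp only [ContinuousMap.coe_mk, hm] at h1
    simp only [G, linFam, Nat.unpair_pair]
    exact h1.trans (le_mul_of_one_le_right hε.le (one_le_wt z))
  have h1 := hq.le_wt hμ hν (F - G) (r := ε) fun z => (le_abs_self _).trans (hG z)
  have h2 := hq.le_wt hμ hν (G - F) (r := ε) fun z => by
    refine (le_abs_self _).trans ?_
    have := hG z
    rw [abs_sub_comm] at this
    exact this
  have h3 := hq.sub.add (F - G) G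
  have h4 := hq.sub.add (G - F) (-G)
  have h5 := hq.lin (Nat.pair m k)
  rw [sub_add_cancel] at h3
  rw [show G - F + -G = -F by abel] at h4
  have h6 : ε * K ≤ ε * |K| := mul_le_mul_of_nonneg_left (le_abs_self K) hε.le
  have h7 : ε * (1 + |K|) = η / 2 := by
    rw [hεd]; field_simp
  rw [← hK] at h1 h2
  have h8 : q G + q (-G) ≤ 0 := h5
  nlinarith

theorem cc_add (hq : QF μ ν q)
    (F G : GrowSp d) (hF : q F + q (-F) = 0) (hG : q G + q (-G) = 0) : q (F + G) = q F + q G := by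
  refine le_antisymm (hq.sub.add F G) ?_
  have h1 := hq.sub.add (-F) (-G)
  have h2 := hq.sub.neg_le (F + G)
  rw [neg_add] at h2
  linarith

theorem cc_smul (hμ : FiniteFirstMoment μ) (hν : FiniteFirstMoment ν) (hq : QF μ ν q)
    (F : GrowSp d) (hc : Continuous F.1) (hs : HasCompactSupport F.1) (r : ℝ) :
    q (r • F) = r * q F := by
  have hl : ∀ r : ℝ, q (r • F) + q (-(r • F)) = 0 := fun r =>
    hq.cc_lin hμ hν (r • F) (hc.const_smul r) (hs.smul_left (f := fun _ => r))
  let A : ℝ →+ ℝ :=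
    { toFun := fun r => q (r • F)
      map_zero' := by simp [hq.sub.zero]
      map_add' := fun r s => by
        rw [add_smul]; exact hq.cc_add _ _ (hl r) (hl s) }
  obtain ⟨C, hC⟩ := F.2
  have hb : ∀ r : ℝ, q (r • F) ≤ (|r| * C) * triJ μ ν (wTri d) := fun r => by
    refine hq.le_wt hμ hν (r • F) fun z => ?_
    change r * F.1 z ≤ _
    refine (le_abs_self _).trans ?_
    rw [abs_mul, mul_assoc]
    exact mul_le_mul_of_nonneg_left (hC z) (abs_nonneg r)
  have hA : Continuous A := by
    refine AddMonoidHomClass.continuous_of_bound A (C * triJ μ ν (wTri d)) fun r => ?_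
    change |q (r • F)| ≤ _
    have h1 := hb r
    have h2 := hb (-r)
    have h3 := hl r
    have e : (-r) • F = -(r • F) := Subtype.ext (neg_smul r F.1)
    rw [e, abs_neg] at h2
    rw [Real.norm_eq_abs, abs_le]
    constructor <;> nlinarith
  have := map_real_smul A hA r 1
  change q ((r • (1 : ℝ)) • F) = r • q ((1 : ℝ) • F) at this
  simpa using this

theorem exists_riesz (hμ : FiniteFirstMoment μ) (hν : FiniteFirstMoment ν) (hq : QF μ ν q) :
    ∃ π : Measure (Euc d × Euc d), IsFiniteMeasureOnCompacts π ∧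
      ∀ F : GrowSp d, Continuous F.1 → HasCompactSupport F.1 → ∫ z, F.1 z ∂π = q F := by
  let ι : CompactlySupportedContinuousMap (Euc d × Euc d) ℝ → GrowSp d := fun f =>
    ⟨f, grow_of_compactSupport f.continuous f.hasCompactSupport⟩
  have hl : ∀ f, q (ι f) + q (-ι f) = 0 := fun f =>
    hq.cc_lin hμ hν (ι f) f.continuous f.hasCompactSupport
  let Λ0 : CompactlySupportedContinuousMap (Euc d × Euc d) ℝ →ₗ[ℝ] ℝ :=
    { toFun := fun f => q (ι f)
      map_add' := fun f g => hq.cc_add (ι f) (ι g) (hl f) (hl g)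
      map_smul' := fun r f => hq.cc_smul hμ hν (ι f) f.continuous f.hasCompactSupport r }
  let Λ := PositiveLinearMap.mk₀ Λ0 fun f hf => by
    have h1 := hl f
    have h2 := hq.nonpos hμ hν (-ι f) fun z => by
      change -(f z) ≤ 0
      have : 0 ≤ f z := hf z
      linarith
    change 0 ≤ q (ι f)
    linarith
  refine ⟨RealRMK.rieszMeasure Λ, ?_, fun F hc hs => ?_⟩
  · have : (RealRMK.rieszMeasure Λ).Regular := inferInstance
    infer_instance
  · exact RealRMK.integral_rieszMeasure Λ ⟨⟨F.1, hc⟩, hs⟩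

theorem integrable_wt (hμ : FiniteFirstMoment μ) (hν : FiniteFirstMoment ν) (hq : QF μ ν q)
    {π : Measure (Euc d × Euc d)} [IsFiniteMeasureOnCompacts π]
    (hπ : ∀ F : GrowSp d, Continuous F.1 → HasCompactSupport F.1 → ∫ z, F.1 z ∂π = q F) :
    Integrable (wt : Euc d × Euc d → ℝ) π := by
  have hnn : ∀ z : Euc d × Euc d, 0 ≤ wt z := fun z => zero_le_one.trans (one_le_wt z)
  refine ⟨continuous_wt.aestronglyMeasurable, ?_⟩
  rw [hasFiniteIntegral_iff_ofReal (ae_of_all _ hnn)]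
  have hcs : ∀ n : ℕ, HasCompactSupport fun z : Euc d × Euc d => cut n z * wt z := fun n =>
    (hasCompactSupport_cut n).mul_right
  have hcc : ∀ n : ℕ, Continuous fun z : Euc d × Euc d => cut n z * wt z := fun n =>
    (continuous_cut n).mul continuous_wt
  have h1 : ∀ n : ℕ, ∫⁻ z, ENNReal.ofReal (cut n z * wt z) ∂π
      ≤ ENNReal.ofReal (triJ μ ν (wTri d)) := fun n => by
    rw [← ofReal_integral_eq_lintegral_ofReal ((hcc n).integrable_of_hasCompactSupport (hcs n))
      (ae_of_all _ fun z => mul_nonneg (cut_nonneg n z) (hnn z))]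
    apply ENNReal.ofReal_le_ofReal
    have h2 := hπ ⟨_, grow_of_compactSupport (hcc n) (hcs n)⟩ (hcc n) (hcs n)
    simp only at h2
    rw [h2]
    refine hq.le _ _ (wTri_mem d) fun z => ?_
    rw [triT_wTri]
    exact mul_le_of_le_one_left (hnn z) (cut_le_one n z)
  have h3 : ∀ z : Euc d × Euc d, ENNReal.ofReal (wt z) =
      liminf (fun n : ℕ => ENNReal.ofReal (cut n z * wt z)) atTop := fun z => by
    refine (Tendsto.liminf_eq ?_).symm
    refine tendsto_const_nhds.congr' ((eventually_cut z).mono fun n h => ?_)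
    simp only
    rw [h, one_mul]
  simp_rw [h3]
  refine lt_of_le_of_lt (lintegral_liminf_le fun n => (hcc n).measurable.ennreal_ofReal) ?_
  refine lt_of_le_of_lt (b := ENNReal.ofReal (triJ μ ν (wTri d))) ?_ ENNReal.ofReal_lt_top
  refine liminf_le_of_le (by isBoundedDefault) fun b hb => ?_
  obtain ⟨n, hn⟩ := hb.exists
  exact hn.trans (h1 n)

theorem integrable_grow {π : Measure (Euc d × Euc d)} (hw : Integrable (wt : Euc d × Euc d → ℝ) π)
    (F : GrowSp d) (hc : Continuous F.1) : Integrable F.1 π := by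
  obtain ⟨C, hC⟩ := F.2
  exact (hw.const_mul C).mono' hc.aestronglyMeasurable (ae_of_all _ hC)

theorem integral_le (hμ : FiniteFirstMoment μ) (hν : FiniteFirstMoment ν) (hq : QF μ ν q)
    {π : Measure (Euc d × Euc d)} (hw : Integrable (wt : Euc d × Euc d → ℝ) π)
    (hπ : ∀ F : GrowSp d, Continuous F.1 → HasCompactSupport F.1 → ∫ z, F.1 z ∂π = q F)
    (F : GrowSp d) (hc : Continuous F.1) : ∫ z, F.1 z ∂π ≤ q F := by
  obtain ⟨C, hC⟩ := F.2
  obtain ⟨N, hN⟩ := exists_nat_ge (2 * C)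
  have hcs : ∀ n : ℕ, HasCompactSupport fun z : Euc d × Euc d => cut n z * F.1 z := fun n =>
    (hasCompactSupport_cut n).mul_right
  have hcc : ∀ n : ℕ, Continuous fun z : Euc d × Euc d => cut n z * F.1 z := fun n =>
    (continuous_cut n).mul hc
  let G : ℕ → GrowSp d := fun n => ⟨_, grow_of_compactSupport (hcc n) (hcs n)⟩
  have h1 : Tendsto (fun n => ∫ z, (G n).1 z ∂π) atTop (nhds (∫ z, F.1 z ∂π)) := by
    refine tendsto_integral_of_dominated_convergence (fun z => C * wt z)
      (fun n => (hcc n).aestronglyMeasurable) (hw.const_mul C)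
      (fun n => ae_of_all _ fun z => ?_) (ae_of_all _ fun z => ?_)
    · refine le_trans ?_ (hC z)
      simp only [G]
      rw [Real.norm_eq_abs, abs_mul, abs_of_nonneg (cut_nonneg n z)]
      exact mul_le_of_le_one_left (abs_nonneg _) (cut_le_one n z)
    · refine tendsto_const_nhds.congr' ((eventually_cut z).mono fun n h => ?_)
      simp only [G]
      rw [h, one_mul]
  have h2 : ∀ n, ∫ z, (G n).1 z ∂π ≤ q F + N * (∫ x, tl n x ∂μ + ∫ x, tl n x ∂ν) := fun n => by
    rw [hπ (G n) (hcc n) (hcs n)]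
    have e1 := hq.sub.add F (G n - F)
    rw [add_sub_cancel] at e1
    have m1 := dual_left (tl_mem_fam d n)
    have m2 := dual_right (tl_mem_fam d n)
    have e2 := hq.le (G n - F) ((N : ℚ) • ((tl n, 0, 0) + (0, tl n, 0)))
      ((dual d).smul_mem _ ((dual d).add_mem m1 m2)) fun z => by
        rw [triT_smul, triT_add, triT_left, triT_right]
        change cut n z * F.1 z - F.1 z ≤ _
        have b1 := hC z
        have b2 := neg_abs_le (F.1 z)
        have b3 := cut_le_one n z
        have b4 : 0 ≤ C * wt z := (abs_nonneg _).trans b1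
        have b5 := one_le_wt z
        have b6 : 0 ≤ C := by
          by_contra hneg
          push Not at hneg
          nlinarith
        have b7 : cut n z * F.1 z - F.1 z ≤ (C * wt z) * (1 - cut n z) := by
          nlinarith
        have b8 : wt z * (1 - cut n z) ≤ 2 * (tl n z.1 + tl n z.2) := by
          have t1 := tl_nonneg n z.1
          have t2 := tl_nonneg n z.2
          rcases le_total ‖z.1‖ ‖z.2‖ with h | h
          · have hz : ‖z‖ = ‖z.2‖ := by rw [Prod.norm_def]; exact max_eq_right h
            have : wt z * (1 - cut n z) ≤ 2 * tl n z.2 := by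
              rw [tl, ← cut_congr n hz, ← mul_assoc]
              refine mul_le_mul_of_nonneg_right ?_ (by linarith)
              unfold wt
              linarith
            linarith
          · have hz : ‖z‖ = ‖z.1‖ := by rw [Prod.norm_def]; exact max_eq_left h
            have : wt z * (1 - cut n z) ≤ 2 * tl n z.1 := by
              rw [tl, ← cut_congr n hz, ← mul_assoc]
              refine mul_le_mul_of_nonneg_right ?_ (by linarith)
              unfold wt
              linarith
            linarith
        have b9 := mul_le_mul_of_nonneg_left b8 b6
        have b10 : 0 ≤ tl n z.1 + tl n z.2 := add_nonneg (tl_nonneg _ _) (tl_nonneg _ _)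
        have b11 := mul_le_mul_of_nonneg_right hN b10
        push_cast
        linarith
    rw [triJ_smul, triJ_add hμ hν (dual_le_good d m1) (dual_le_good d m2)] at e2
    simp only [triJ, Pi.zero_apply, integral_zero, add_zero, zero_add] at e2
    push_cast at e2
    linarith
  have h3 : Tendsto (fun n : ℕ => q F + N * (∫ x, tl n x ∂μ + ∫ x, tl n x ∂ν)) atTop
      (nhds (q F + N * (0 + 0))) :=
    (((tendsto_tl hμ).add (tendsto_tl hν)).const_mul _).const_add _
  have := le_of_tendsto_of_tendsto' h1 h3 h2
  simpa using this

end QF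

namespace QF

variable {d : ℕ} {μ ν : Measure (Euc d)} [IsProbabilityMeasure μ] [IsProbabilityMeasure ν]
  {q : GrowSp d → ℝ}

theorem exists_fam {f : Euc d → ℝ} (hc : Continuous f) (hs : HasCompactSupport f)
    {ε : ℝ} (hε : 0 < ε) : ∃ g ∈ fam d, ∀ x, |f x - g x| ≤ ε := by
  obtain ⟨m, hm⟩ := exists_cut_of_compactSupport hs
  obtain ⟨k, hk⟩ := exists_dseq ⟨f, hc⟩ m hε
  refine ⟨_, cut_mem_fam d m k, fun x => ?_⟩
  have h1 := hk x
  simpa only [ContinuousMap.coe_mk, hm] using h1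

theorem bounded_cc {f : Euc d → ℝ} (hc : Continuous f) (hs : HasCompactSupport f) :
    ∃ C, 0 ≤ C ∧ ∀ x, |f x| ≤ C := by
  obtain ⟨C, hC⟩ := hs.exists_bound_of_continuous hc
  exact ⟨C, (norm_nonneg _).trans (hC 0), hC⟩

theorem linGrow_cc {f : Euc d → ℝ} (hc : Continuous f) (hs : HasCompactSupport f) :
    LinGrow f := by
  obtain ⟨C, h0, hC⟩ := bounded_cc hc hs
  refine ⟨C, fun x => (hC x).trans (le_mul_of_one_le_right h0 ?_)⟩
  linarith [norm_nonneg x]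

theorem integral_approx {κ : Measure (Euc d)} [IsProbabilityMeasure κ] (hκ : FiniteFirstMoment κ)
    {f g : Euc d → ℝ} (hc : Continuous f) (hs : HasCompactSupport f) (hg : g ∈ fam d) {ε : ℝ}
    (h : ∀ x, |f x - g x| ≤ ε) : ∫ x, g x ∂κ ≤ ∫ x, f x ∂κ + ε := by
  have i1 := (linGrow_cc hc hs).integrable hc hκ
  have i2 := (fam_good hg).2.integrable (fam_good hg).1 hκ
  have h1 := integral_mono i2 (i1.add (integrable_const ε)) fun x => by
    have := (abs_le.1 (h x)).1
    simp only [Pi.add_apply]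
    linarith
  simp only [Pi.add_apply] at h1
  rw [integral_add i1 (integrable_const ε)] at h1
  simpa using h1

theorem fst_le (hμ : FiniteFirstMoment μ) (hν : FiniteFirstMoment ν) (hq : QF μ ν q)
    {π : Measure (Euc d × Euc d)} (hw : Integrable (wt : Euc d × Euc d → ℝ) π)
    (hπ : ∀ F : GrowSp d, Continuous F.1 → HasCompactSupport F.1 → ∫ z, F.1 z ∂π = q F)
    {f : Euc d → ℝ} (hc : Continuous f) (hs : HasCompactSupport f) :
    ∫ z, f z.1 ∂π ≤ ∫ x, f x ∂μ := by
  obtain ⟨C, h0, hC⟩ := bounded_cc hc hs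
  let F : GrowSp d := ⟨fun z => f z.1, C, fun z =>
    (hC z.1).trans (le_mul_of_one_le_right h0 (one_le_wt z))⟩
  refine (hq.integral_le hμ hν hw hπ F (hc.comp continuous_fst)).trans ?_
  refine hq.le_of_approx hμ hν F _ fun ε hε => ?_
  have hε' : (0 : ℝ) < ε := by exact_mod_cast hε
  obtain ⟨g, hg, hfg⟩ := exists_fam hc hs hε'
  refine ⟨_, dual_left hg, fun z => ?_, ?_⟩
  · rw [triT_left]
    have h1 := (abs_le.1 (hfg z.1)).2
    have h2 := le_mul_of_one_le_right hε'.le (one_le_wt z)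
    change f z.1 ≤ _
    linarith
  · simpa [triJ] using integral_approx hμ hc hs hg hfg

theorem snd_le (hμ : FiniteFirstMoment μ) (hν : FiniteFirstMoment ν) (hq : QF μ ν q)
    {π : Measure (Euc d × Euc d)} (hw : Integrable (wt : Euc d × Euc d → ℝ) π)
    (hπ : ∀ F : GrowSp d, Continuous F.1 → HasCompactSupport F.1 → ∫ z, F.1 z ∂π = q F)
    {f : Euc d → ℝ} (hc : Continuous f) (hs : HasCompactSupport f) :
    ∫ z, f z.2 ∂π ≤ ∫ x, f x ∂ν := by
  obtain ⟨C, h0, hC⟩ := bounded_cc hc hs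
  let F : GrowSp d := ⟨fun z => f z.2, C, fun z =>
    (hC z.2).trans (le_mul_of_one_le_right h0 (one_le_wt z))⟩
  refine (hq.integral_le hμ hν hw hπ F (hc.comp continuous_snd)).trans ?_
  refine hq.le_of_approx hμ hν F _ fun ε hε => ?_
  have hε' : (0 : ℝ) < ε := by exact_mod_cast hε
  obtain ⟨g, hg, hfg⟩ := exists_fam hc hs hε'
  refine ⟨_, dual_right hg, fun z => ?_, ?_⟩
  · rw [triT_right]
    have h1 := (abs_le.1 (hfg z.2)).2
    have h2 := le_mul_of_one_le_right hε'.le (one_le_wt z)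
    change f z.2 ≤ _
    linarith
  · simpa [triJ] using integral_approx hν hc hs hg hfg

theorem abs_coord_le (z : Euc d × Euc d) (i : Fin d) : |z.2 i - z.1 i| ≤ wt z := by
  have h1 : |z.1 i| ≤ ‖z.1‖ := PiLp.norm_apply_le z.1 i
  have h2 : |z.2 i| ≤ ‖z.2‖ := PiLp.norm_apply_le z.2 i
  have h3 := abs_sub (z.2 i) (z.1 i)
  unfold wt
  linarith

theorem mart_le (hμ : FiniteFirstMoment μ) (hν : FiniteFirstMoment ν) (hq : QF μ ν q)
    {π : Measure (Euc d × Euc d)} (hw : Integrable (wt : Euc d × Euc d → ℝ) π)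
    (hπ : ∀ F : GrowSp d, Continuous F.1 → HasCompactSupport F.1 → ∫ z, F.1 z ∂π = q F)
    {f : Euc d → ℝ} (hc : Continuous f) (hs : HasCompactSupport f) (i : Fin d) :
    ∫ z, f z.1 * (z.2 i - z.1 i) ∂π ≤ 0 := by
  obtain ⟨C, h0, hC⟩ := bounded_cc hc hs
  let F : GrowSp d := ⟨fun z => f z.1 * (z.2 i - z.1 i), C, fun z => by
    rw [abs_mul]
    exact mul_le_mul (hC _) (abs_coord_le z i) (abs_nonneg _) h0⟩
  have hF : Continuous F.1 := by
    change Continuous fun z : Euc d × Euc d => f z.1 * (z.2 i - z.1 i)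
    fun_prop
  refine (hq.integral_le hμ hν hw hπ F hF).trans ?_
  refine hq.le_of_approx hμ hν F _ fun ε hε => ?_
  have hε' : (0 : ℝ) < ε := by exact_mod_cast hε
  obtain ⟨g, hg, hfg⟩ := exists_fam hc hs hε'
  refine ⟨_, dual_mart hg i, fun z => ?_, ?_⟩
  · rw [triT_mart]
    have h1 : |(f z.1 - g z.1) * (z.2 i - z.1 i)| ≤ ε * wt z := by
      rw [abs_mul]
      exact mul_le_mul (hfg _) (abs_coord_le z i) (abs_nonneg _) hε'.le
    have h2 := (abs_le.1 h1).2
    change f z.1 * (z.2 i - z.1 i) ≤ _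
    linarith
  · simp [triJ, hε'.le]

end QF

theorem martingale_of_test {d : ℕ} {π : Measure (Euc d × Euc d)} [IsProbabilityMeasure π]
    (hX : Integrable (fun z : Euc d × Euc d => z.1) π)
    (hY : Integrable (fun z : Euc d × Euc d => z.2) π)
    (h : ∀ f : Euc d → ℝ, Continuous f → HasCompactSupport f → ∀ i,
      ∫ z, f z.1 * (z.2 i - z.1 i) ∂π = 0) : IsMartingaleCoupling π := by
  unfold IsMartingaleCoupling
  have hm : fstSigma d ≤ (inferInstance : MeasurableSpace (Euc d × Euc d)) :=
    measurable_fst.comap_le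
  let b : Euc d → Euc d := fun x => ∫ y, y ∂condDistrib Prod.snd Prod.fst π x
  have hb : StronglyMeasurable b := stronglyMeasurable_id.integral_kernel
  have e1 : π[(fun p : Euc d × Euc d => p.2) | fstSigma d] =ᵐ[π] fun z => b z.1 :=
    condExp_ae_eq_integral_condDistrib' measurable_fst hY
  have ib : Integrable (fun z : Euc d × Euc d => b z.1) π := integrable_condExp.congr e1
  have ib' : Integrable b (π.map Prod.fst) :=
    (integrable_map_measure hb.aestronglyMeasurable measurable_fst.aemeasurable).2 ib
  have iX' : Integrable (fun x : Euc d => x) (π.map Prod.fst) :=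
    (integrable_map_measure aestronglyMeasurable_id measurable_fst.aemeasurable).2 hX
  have key : ∀ᵐ x ∂(π.map Prod.fst), b x = x := by
    refine ae_eq_of_integral_contDiff_smul_eq ib'.locallyIntegrable iX'.locallyIntegrable ?_
    intro g hg hgs
    have hgc := hg.continuous
    obtain ⟨C, h0, hC⟩ := QF.bounded_cc hgc hgs
    have smul_int : ∀ {Y : Euc d × Euc d → Euc d}, Integrable Y π →
        Integrable (fun z => g z.1 • Y z) π := fun {Y} hY =>
      hY.bdd_smul C (hgc.comp continuous_fst).aestronglyMeasurable
        (ae_of_all _ fun z => hC z.1)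
    rw [integral_map (f := fun x => g x • b x) measurable_fst.aemeasurable
        (hgc.aestronglyMeasurable.smul hb.aestronglyMeasurable),
      integral_map (f := fun x => g x • x) measurable_fst.aemeasurable
        (hgc.aestronglyMeasurable.smul aestronglyMeasurable_id)]
    have s1 : ∫ z, g z.1 • b z.1 ∂π = ∫ z, g z.1 • z.2 ∂π := by
      have hgm : StronglyMeasurable[fstSigma d] (fun z : Euc d × Euc d => g z.1) :=
        hgc.stronglyMeasurable.comp_measurable (comap_measurable Prod.fst)
      have e2 := condExp_smul_of_aestronglyMeasurable_left (μ := π) (m := fstSigma d)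
        hgm.aestronglyMeasurable (smul_int hY) hY
      rw [← integral_condExp hm (f := fun z : Euc d × Euc d => g z.1 • z.2)]
      refine integral_congr_ae ?_
      filter_upwards [e1, e2] with z h1 h2
      rw [← h1]
      exact h2.symm
    rw [s1, ← sub_eq_zero, ← integral_sub (smul_int hY) (smul_int hX)]
    have iD : Integrable (fun z : Euc d × Euc d => g z.1 • z.2 - g z.1 • z.1) π :=
      (smul_int hY).sub (smul_int hX)
    ext i
    have s2 := (EuclideanSpace.proj (𝕜 := ℝ) i).integral_comp_comm iD
    have s3 := h g hgc hgs i
    change _ = (∫ z, (g z.1 • z.2 - g z.1 • z.1) ∂π) i at s2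
    rw [← s2]
    simpa [mul_sub] using s3
  filter_upwards [e1, ae_of_ae_map measurable_fst.aemeasurable key] with z h1 h2
  rw [h1, h2]

theorem exists_coupling_of_QF {d : ℕ} {μ ν : Measure (Euc d)} [IsProbabilityMeasure μ]
    [IsProbabilityMeasure ν] (hμ : FiniteFirstMoment μ) (hν : FiniteFirstMoment ν)
    {q : GrowSp d → ℝ} (hq : QF μ ν q) :
    ∃ π : Measure (Euc d × Euc d), IsProbabilityMeasure π ∧ IsCoupling π μ ν ∧
      IsMartingaleCoupling π ∧
      ∀ F : GrowSp d, Continuous F.1 → HasCompactSupport F.1 → ∫ z, F.1 z ∂π = q F := by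
  obtain ⟨π, hfc, hπ⟩ := hq.exists_riesz hμ hν
  have hw := hq.integrable_wt hμ hν hπ
  let one : GrowSp d := ⟨fun _ => 1, 1, fun z => by simpa using one_le_wt z⟩
  have i1 : Integrable (fun _ : Euc d × Euc d => (1 : ℝ)) π :=
    QF.integrable_grow hw one continuous_const
  have hfin : IsFiniteMeasure π := by
    rw [integrable_const_iff] at i1
    simpa [isFiniteMeasure_iff] using i1
  have hone : π.real Set.univ = 1 := by
    have a1 := hq.integral_le hμ hν hw hπ one continuous_const
    have a2 := hq.integral_le hμ hν hw hπ (-one)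
      (show Continuous fun _ : Euc d × Euc d => -(1 : ℝ) from continuous_const)
    have m := dual_left (one_mem_fam d)
    have b1 := hq.le one _ m fun z => by rw [triT_left]
    have b2 := hq.le (-one) _ ((dual d).smul_mem (-1) m) fun z => by
      rw [triT_smul, triT_left]
      change -(1 : ℝ) ≤ _
      norm_num
    rw [triJ_smul] at b2
    simp [triJ] at b1 b2
    simp only [one, integral_const, smul_eq_mul, mul_one] at a1
    change ∫ z, -(1 : ℝ) ∂π ≤ _ at a2
    simp only [integral_const, smul_eq_mul] at a2
    linarith
  have hprob : IsProbabilityMeasure π :=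
    ⟨by rwa [measureReal_def, ENNReal.toReal_eq_one_iff] at hone⟩
  have hp1 : IsProbabilityMeasure (π.map Prod.fst) :=
    Measure.isProbabilityMeasure_map measurable_fst.aemeasurable
  have hp2 : IsProbabilityMeasure (π.map Prod.snd) :=
    Measure.isProbabilityMeasure_map measurable_snd.aemeasurable
  have c1 : π.map Prod.fst = μ := by
    refine Measure.ext_of_integral_eq_on_compactlySupported fun f => ?_
    have hfc : Continuous fun x => f x := f.continuous
    have hfs : HasCompactSupport fun x => f x := f.hasCompactSupport
    rw [integral_map (f := fun x => f x) measurable_fst.aemeasurable hfc.aestronglyMeasurable]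
    have h1 := hq.fst_le hμ hν hw hπ hfc hfs
    have h2 := hq.fst_le hμ hν hw hπ hfc.neg hfs.neg
    simp only [Pi.neg_apply, integral_neg] at h2
    linarith
  have c2 : π.map Prod.snd = ν := by
    refine Measure.ext_of_integral_eq_on_compactlySupported fun f => ?_
    have hfc : Continuous fun x => f x := f.continuous
    have hfs : HasCompactSupport fun x => f x := f.hasCompactSupport
    rw [integral_map (f := fun x => f x) measurable_snd.aemeasurable hfc.aestronglyMeasurable]
    have h1 := hq.snd_le hμ hν hw hπ hfc hfs
    have h2 := hq.snd_le hμ hν hw hπ hfc.neg hfs.neg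
    simp only [Pi.neg_apply, integral_neg] at h2
    linarith
  refine ⟨π, hprob, ⟨c1, c2⟩, ?_, hπ⟩
  have hX : Integrable (fun z : Euc d × Euc d => z.1) π := by
    refine (integrable_map_measure aestronglyMeasurable_id measurable_fst.aemeasurable).1 ?_
    rw [c1]; exact hμ
  have hY : Integrable (fun z : Euc d × Euc d => z.2) π := by
    refine (integrable_map_measure aestronglyMeasurable_id measurable_snd.aemeasurable).1 ?_
    rw [c2]; exact hν
  refine martingale_of_test hX hY fun f hc hs i => ?_
  have h1 := hq.mart_le hμ hν hw hπ hc hs i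
  have h2 := hq.mart_le hμ hν hw hπ hc.neg hs.neg i
  simp only [Pi.neg_apply, neg_mul, integral_neg] at h2
  linarith

theorem measurable_of_cc {d : ℕ} {S : Type*} [MeasurableSpace S]
    (π : S → Measure (Euc d × Euc d)) (hprob : ∀ θ, IsProbabilityMeasure (π θ))
    (h : ∀ F : Euc d × Euc d → ℝ, Continuous F → HasCompactSupport F →
      Measurable fun θ => ∫ z, F z ∂(π θ)) : Measurable π := by
  have hbc : ∀ F : Euc d × Euc d → ℝ, Continuous F → (∀ z, |F z| ≤ 1) →
      Measurable fun θ => ∫ z, F z ∂(π θ) := by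
    intro F hF hb
    refine measurable_of_tendsto_metrizable (f := fun (n : ℕ) θ => ∫ z, cut n z * F z ∂(π θ))
      (fun n => h _ ((continuous_cut n).mul hF) (hasCompactSupport_cut n).mul_right) ?_
    rw [tendsto_pi_nhds]
    intro θ
    refine tendsto_integral_of_dominated_convergence (fun _ => 1)
      (fun n => ((continuous_cut n).mul hF).aestronglyMeasurable) (integrable_const 1)
      (fun n => ae_of_all _ fun z => ?_) (ae_of_all _ fun z => ?_)
    · rw [Real.norm_eq_abs, abs_mul, abs_of_nonneg (cut_nonneg n z)]
      exact mul_le_one₀ (cut_le_one n z) (abs_nonneg _) (hb z)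
    · refine tendsto_const_nhds.congr' ((eventually_cut z).mono fun n h => ?_)
      simp only
      rw [h, one_mul]
  refine Measurable.measure_of_isPiSystem_of_isProbabilityMeasure
    (S := {s : Set (Euc d × Euc d) | IsClosed s}) ?_ isPiSystem_isClosed fun C hC => ?_
  · rw [← borel_eq_generateFrom_isClosed]
    exact BorelSpace.measurable_eq
  · have hδ : ∀ n : ℕ, (0 : ℝ) < 1 / ((n : ℝ) + 1) := fun n => Nat.one_div_pos_of_nat
    refine measurable_of_tendsto_metrizable
      (f := fun (n : ℕ) θ => ∫⁻ z, (thickenedIndicator (hδ n) C z : ENNReal) ∂(π θ))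
      (fun n => ?_) ?_
    · have e : ∀ θ, ∫⁻ z, (thickenedIndicator (hδ n) C z : ENNReal) ∂(π θ) =
          ENNReal.ofReal (∫ z, (thickenedIndicator (hδ n) C z : ℝ) ∂(π θ)) := fun θ => by
        rw [ofReal_integral_eq_lintegral_ofReal]
        · simp
        · exact (integrable_const (1 : ℝ)).mono'
            (NNReal.continuous_coe.comp (thickenedIndicator (hδ n) C).continuous
              ).aestronglyMeasurable
            (ae_of_all _ fun z => by
              simpa using thickenedIndicator_le_one (hδ n) C z)
        · exact ae_of_all _ fun z => NNReal.coe_nonneg _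
      simp_rw [e]
      refine (hbc _ ?_ fun z => ?_).ennreal_ofReal
      · exact NNReal.continuous_coe.comp (thickenedIndicator (hδ n) C).continuous
      · simpa using thickenedIndicator_le_one (hδ n) C z
    · rw [tendsto_pi_nhds]
      intro θ
      exact tendsto_lintegral_thickenedIndicator_of_isClosed (π θ) hC hδ
        tendsto_one_div_add_atTop_nhds_zero_nat

theorem convexOrder_of_coupling {d : ℕ} {μ ν : Measure (Euc d)}
    (hμ : FiniteFirstMoment μ) (hν : FiniteFirstMoment ν)
    {π : Measure (Euc d × Euc d)} [IsProbabilityMeasure π] (hc : IsCoupling π μ ν)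
    (hm : IsMartingaleCoupling π) : ConvexOrder μ ν := by
  obtain ⟨rfl, rfl⟩ := hc
  intro φ hφ i1 i2
  have hcont : Continuous φ := by
    rw [← continuousOn_univ]
    exact hφ.continuousOn isOpen_univ
  have hle : fstSigma d ≤ (inferInstance : MeasurableSpace (Euc d × Euc d)) :=
    measurable_fst.comap_le
  have hY : Integrable (fun z : Euc d × Euc d => z.2) π :=
    (integrable_map_measure aestronglyMeasurable_id measurable_snd.aemeasurable).1 hν
  have iX := (integrable_map_measure hcont.aestronglyMeasurable measurable_fst.aemeasurable).1 i1
  have iY := (integrable_map_measure hcont.aestronglyMeasurable measurable_snd.aemeasurable).1 i2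
  rw [integral_map measurable_fst.aemeasurable hcont.aestronglyMeasurable,
    integral_map measurable_snd.aemeasurable hcont.aestronglyMeasurable]
  have hJ := hφ.map_condExp_le_univ hle hcont.lowerSemicontinuous hY iY
  have e : ∫ z : Euc d × Euc d, φ z.2 ∂π = _ :=
    (integral_condExp hle (μ := π) (f := φ ∘ fun z : Euc d × Euc d => z.2)).symm
  rw [e]
  refine integral_mono_ae iX integrable_condExp ?_
  filter_upwards [hm, hJ] with z h1 h2
  simp only [Function.comp_apply] at h2 ⊢
  rw [h1] at h2
  exact h2


/-- Kernel version of Strassen's theorem (convex order): P_θ ≤cx Q_θ for all θ iff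
P and Q admit a pointwise martingale coupling. -/
theorem strassen_kernel_martingale_coupling
    (d : ℕ) (hd : 1 ≤ d) {S : Type} [MeasurableSpace S]
    (P Q : Kernel S (Euc d)) [IsMarkovKernel P] [IsMarkovKernel Q]
    (hP : ∀ θ, FiniteFirstMoment (P θ)) (hQ : ∀ θ, FiniteFirstMoment (Q θ)) :
    (∀ θ, ConvexOrder (P θ) (Q θ)) ↔
      ∃ R : Kernel S (Euc d × Euc d), IsMarkovKernel R ∧
        ∀ θ, IsCoupling (R θ) (P θ) (Q θ) ∧ IsMartingaleCoupling (R θ) := by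

  constructor
  · intro hcx
    let q : S → GrowSp d → ℝ := fun θ => linLim (hb (P θ) (Q θ)) (linFam d)
    have hs : ∀ θ, SubLin (hb (P θ) (Q θ)) := fun θ => hb_subLin (hP θ) (hQ θ) (hcx θ)
    have hq : ∀ θ, QF (P θ) (Q θ) (q θ) := fun θ =>
      { sub := (hs θ).lim _
        le := fun F c hc h => ((hs θ).lim_le_self _ F).trans (hb_le (hP θ) (hQ θ) (hcx θ) F hc h)
        lin := (hs θ).lim_linear _ }
    choose π h1 h2 h3 h4 using fun θ => exists_coupling_of_QF (hP θ) (hQ θ) (hq θ)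
    have hmeas : Measurable π := by
      refine measurable_of_cc π h1 fun F hc hsupp => ?_
      have := measurable_linLim (fun θ => hb (P θ) (Q θ)) (measurable_hb P Q) (linFam d)
        ⟨F, grow_of_compactSupport hc hsupp⟩
      have e : (fun θ => ∫ z, F z ∂(π θ)) = fun θ => linLim (hb (P θ) (Q θ)) (linFam d)
          ⟨F, grow_of_compactSupport hc hsupp⟩ :=
        funext fun θ => h4 θ ⟨F, grow_of_compactSupport hc hsupp⟩ hc hsupp
      rw [e]
      exact this
    exact ⟨⟨π, hmeas⟩, ⟨h1⟩, fun θ => ⟨h2 θ, h3 θ⟩⟩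
  · rintro ⟨R, hR, h⟩ θ
    exact convexOrder_of_coupling (hP θ) (hQ θ) (h θ).1 (h θ).2
end
end
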